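/- arXiv:0802.0584 — 2 statements merged into one kernel-verified Lean document; each statement's English description precedes it below -/
import Mathlib

section
/- Let u₁, …, u_k ∈ F₂ and let L = max_{1 ≤ i ≤ k} |u_i|. Suppose that φ is a chain of type (C1) with |φ| ≥ 4L+5 such that ‖φ(u_i)‖ = ‖u_i‖ for every i = 1, …, k. Then there exists a chain ψ of type (C1) with |ψ| < |φ| such that ψ(u_i) is conjugate in F₂ to φ(u_i) for every i = 1, …, k. -/
noncomputable section

/-- The free group of rank two. -/
abbrev F : Type := FreeGroup (Fin 2)

/-- The generator `a`. -/
def ga : F := FreeGroup.of 0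

/-- The generator `b`. -/
def gb : F := FreeGroup.of 1

/-- Build an automorphism of `F` from images of the generators together with
an explicit inverse. -/
def mkAut (x y xi yi : F)
    (h1 : FreeGroup.lift ![xi, yi] x = ga)
    (h2 : FreeGroup.lift ![xi, yi] y = gb)
    (h3 : FreeGroup.lift ![x, y] xi = ga)
    (h4 : FreeGroup.lift ![x, y] yi = gb) : MulAut F :=
  MonoidHom.toMulEquiv (FreeGroup.lift ![x, y]) (FreeGroup.lift ![xi, yi])
    (by
      ext i
      fin_cases i
      · simpa [ga] using h1
      · simpa [gb] using h2)
    (by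
      ext i
      fin_cases i
      · simpa [ga] using h3
      · simpa [gb] using h4)

/-- `σ : a ↦ ab, b ↦ b`. -/
def σ : MulAut F :=
  mkAut (ga * gb) gb (ga * gb⁻¹) gb
    (by simp [ga, gb]) (by simp [ga, gb]) (by simp [ga, gb]) (by simp [ga, gb])

/-- `τ : a ↦ a, b ↦ ba`. -/
def τ : MulAut F :=
  mkAut ga (gb * ga) ga (gb * ga⁻¹)
    (by simp [ga, gb]) (by simp [ga, gb]) (by simp [ga, gb]) (by simp [ga, gb])

/-- `δ₁ : a ↦ b⁻¹ab, b ↦ b`. -/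
def δ₁ : MulAut F :=
  mkAut (gb⁻¹ * ga * gb) gb (gb * ga * gb⁻¹) gb
    (by simp [ga, gb, mul_assoc]) (by simp [ga, gb]) (by simp [ga, gb, mul_assoc]) (by simp [ga, gb])

/-- `δ₂ : a ↦ bab⁻¹, b ↦ b`. -/
def δ₂ : MulAut F :=
  mkAut (gb * ga * gb⁻¹) gb (gb⁻¹ * ga * gb) gb
    (by simp [ga, gb, mul_assoc]) (by simp [ga, gb]) (by simp [ga, gb, mul_assoc]) (by simp [ga, gb])

/-- `δ₃ : a ↦ a, b ↦ a⁻¹ba`. -/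
def δ₃ : MulAut F :=
  mkAut ga (ga⁻¹ * gb * ga) ga (ga * gb * ga⁻¹)
    (by simp [ga, gb]) (by simp [ga, gb, mul_assoc]) (by simp [ga, gb]) (by simp [ga, gb, mul_assoc])

/-- `δ₄ : a ↦ a, b ↦ aba⁻¹`. -/
def δ₄ : MulAut F :=
  mkAut ga (ga * gb * ga⁻¹) ga (ga⁻¹ * gb * ga)
    (by simp [ga, gb]) (by simp [ga, gb, mul_assoc]) (by simp [ga, gb]) (by simp [ga, gb, mul_assoc])

/-- `π : a ↦ b, b ↦ a⁻¹`. -/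
def pi' : MulAut F :=
  mkAut gb ga⁻¹ gb⁻¹ ga
    (by simp [ga, gb]) (by simp [ga, gb]) (by simp [ga, gb]) (by simp [ga, gb])

/-- Word length of (the reduced word representing) an element of `F`. -/
def len (w : F) : ℕ := w.toWord.length

/-- Cyclic length: minimal word length among all conjugates. -/
def cyclen (w : F) : ℕ := sInf {n | ∃ g : F, len (g * w * g⁻¹) = n}

/-- The chain `τ^{m_k}σ^{l_k}⋯τ^{m_1}σ^{l_1}` of type (C1) determined by the list
`[(l_k, m_k), …, (l_1, m_1)]` of pairs of exponents. -/
def chainC1 (c : List (ℕ × ℕ)) : MulAut F :=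
  (c.map fun p => τ ^ p.2 * σ ^ p.1).prod

/-- The chain `τ^{-m_k}σ^{-l_k}⋯τ^{-m_1}σ^{-l_1}` of type (C2) determined by the list
`[(l_k, m_k), …, (l_1, m_1)]` of pairs of exponents. -/
def chainC2 (c : List (ℕ × ℕ)) : MulAut F :=
  (c.map fun p => (τ ^ p.2)⁻¹ * (σ ^ p.1)⁻¹).prod

/-- Number of factors of `σ` in a chain. -/
def sigmaCount (c : List (ℕ × ℕ)) : ℕ := (c.map Prod.fst).sum

/-- Number of factors of `τ` in a chain. -/
def tauCount (c : List (ℕ × ℕ)) : ℕ := (c.map Prod.snd).sum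

/-- The length `Σ (l_i + m_i)` of a chain. -/
def chainLen (c : List (ℕ × ℕ)) : ℕ := sigmaCount c + tauCount c

/-- A Whitehead automorphism of type (W1): it permutes `{a, a⁻¹, b, b⁻¹}`. -/
def IsW1 (β : MulAut F) : Prop :=
  β ga ∈ ({ga, ga⁻¹, gb, gb⁻¹} : Set F) ∧ β gb ∈ ({ga, ga⁻¹, gb, gb⁻¹} : Set F)

/-- A chain of type (C1). -/
def IsC1 (φ : MulAut F) : Prop := ∃ c : List (ℕ × ℕ), c ≠ [] ∧ φ = chainC1 c

/-- A chain of type (C2). -/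
def IsC2 (φ : MulAut F) : Prop := ∃ c : List (ℕ × ℕ), c ≠ [] ∧ φ = chainC2 c

/-- A positive element: a product of the generators `a` and `b`. -/
def IsPositive (w : F) : Prop := w ∈ Submonoid.closure ({ga, gb} : Set F)

/-- The four automorphisms `δ₁, δ₂, δ₃, δ₄`. -/
def δIdx : Fin 4 → MulAut F := ![δ₁, δ₂, δ₃, δ₄]

/-!
Let `gen 0 = σ` and `gen 1 = τ`. For fixed `u`, the cyclic lengths of the images of `u` under the
successive tails of a chain form a convex sequence: by counting insertions and cancellations
between consecutive letters of a cyclically reduced word for `v`, one finds that `‖gen j v‖ +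
‖(gen i)⁻¹ v‖ - 2 ‖v‖` is the number of consecutive letters that are equal to each other and are
powers of the generator `i` or `j` (those being counted twice if `i = j`). A convex sequence of
natural numbers which is at most `L` at both ends is constant away from the `L` outermost steps on
either side, so the middle part of the chain preserves all the cyclic lengths.

Write a cyclic word as a sequence of syllables `x^{±1} y^k`, where `gen i` moves `x` and fixes
`y`; then `gen i` adds to each exponent `k` a constant in `{0, 1, -1}`. If the middle part
contains a long run of `gen i`, all these constants vanish, as otherwise some exponent would be
large at one of the ends of the run. If it contains `gen i` next to `gen j` with `j ≠ i`, the
absence of consecutive equal letters before and after `gen i` shows that all the exponents are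
`±1` and that none is cancelled, and again all the constants vanish since the length does not
change. In both cases `gen i` preserves the conjugacy classes it is applied to, and it can be
deleted from the chain.
-/

section CyclicPairs

variable {α β : Type*}

/-- The pairs of cyclically consecutive entries of a list, the last entry being followed by the
first. -/
def cyclicPairs (w : List α) : List (α × α) := w.zip (w.rotate 1)

theorem cyclicPairs_cons (x : α) (s : List α) :
    cyclicPairs (x :: s) = (x :: s).zip (s ++ [x]) := by
  simp [cyclicPairs]

theorem cyclicPairs_rotate (w : List α) (n : ℕ) :
    cyclicPairs (w.rotate n) = (cyclicPairs w).rotate n := by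
  simp only [cyclicPairs, List.zip_eq_zipWith]
  rw [List.zipWith_rotate_distrib _ _ _ _ (List.length_rotate ..).symm, List.rotate_rotate,
    List.rotate_rotate, add_comm]

theorem cyclicPairs_map (f : α → β) (w : List α) :
    cyclicPairs (w.map f) = (cyclicPairs w).map (Prod.map f f) := by
  rw [cyclicPairs, cyclicPairs, ← List.map_rotate, List.zip_map]

theorem cyclicPairs_replicate (n : ℕ) (x : α) :
    cyclicPairs (List.replicate n x) = List.replicate n (x, x) := by
  rw [cyclicPairs, List.rotate_replicate, List.zip_replicate']

theorem map_fst_cyclicPairs (w : List α) : (cyclicPairs w).map Prod.fst = w :=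
  List.map_fst_zip (List.length_rotate ..).ge

theorem map_snd_cyclicPairs (w : List α) : (cyclicPairs w).map Prod.snd = w.rotate 1 :=
  List.map_snd_zip (List.length_rotate ..).le

theorem sum_cyclicPairs_fst {M : Type*} [AddMonoid M] (T : α → M) (w : List α) :
    ((cyclicPairs w).map fun p => T p.1).sum = (w.map T).sum := by
  conv_rhs => rw [← map_fst_cyclicPairs w, List.map_map]
  rfl

theorem sum_cyclicPairs_snd {M : Type*} [AddCommMonoid M] (T : α → M) (w : List α) :
    ((cyclicPairs w).map fun p => T p.2).sum = (w.map T).sum := by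
  have hperm : ((w.rotate 1).map T).Perm (w.map T) := (w.rotate_perm 1).map T
  rw [← hperm.sum_eq, ← map_snd_cyclicPairs w, List.map_map]
  rfl

theorem mem_cyclicPairs_cyclicPairs {w : List α} {p q : α × α}
    (h : (p, q) ∈ cyclicPairs (cyclicPairs w)) : p ∈ cyclicPairs w ∧ p.2 = q.1 := by
  refine ⟨(List.of_mem_zip h).1, ?_⟩
  have hmatch : (cyclicPairs w).map Prod.snd = ((cyclicPairs w).rotate 1).map Prod.fst := by
    rw [map_snd_cyclicPairs, List.map_rotate, map_fst_cyclicPairs]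
  obtain ⟨n, hn⟩ := List.getElem?_of_mem h
  obtain ⟨hp, hq⟩ := List.getElem?_zip_eq_some.1 hn
  simpa [hp, hq, -List.map_rotate] using congrArg (fun s => s[n]?) hmatch

theorem zip_flatMap (h : β → α) (t : β → List α) (s : List β) (x y : β) :
    ((x :: s).flatMap fun z => h z :: t z).zip
        (t x ++ (s.flatMap fun z => h z :: t z) ++ [h y]) =
      ((x :: s).zip (s ++ [y])).flatMap fun p => (h p.1 :: t p.1).zip (t p.1 ++ [h p.2]) := by
  induction s generalizing x with
  | nil => simp
  | cons z s ih =>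
    conv_rhs =>
      rw [List.cons_append, List.zip_cons_cons, List.flatMap_cons, ← ih,
        ← List.zip_append (by simp)]
    simp

theorem cyclicPairs_flatMap (h : β → α) (t : β → List α) (r : List β) :
    cyclicPairs (r.flatMap fun z => h z :: t z) =
      (cyclicPairs r).flatMap fun p => (h p.1 :: t p.1).zip (t p.1 ++ [h p.2]) := by
  cases r with
  | nil => rfl
  | cons x s =>
    rw [cyclicPairs_cons x s, ← zip_flatMap, List.flatMap_cons, List.cons_append,
      cyclicPairs_cons]

theorem isConj_prod_cyclicPairs {G : Type*} [Group G] (f h : α → G) (w : List α) :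
    IsConj (w.map f).prod ((cyclicPairs w).map fun p => (h p.1)⁻¹ * f p.1 * h p.2).prod := by
  have telescope (s : List α) (x y : α) :
      (((x :: s).zip (s ++ [y])).map fun p => (h p.1)⁻¹ * f p.1 * h p.2).prod =
        (h x)⁻¹ * ((x :: s).map f).prod * h y := by
    induction s generalizing x with
    | nil => simp
    | cons z s ih =>
      rw [List.cons_append, List.zip_cons_cons, List.map_cons, List.prod_cons, ih]
      simp [mul_assoc]
  cases w with
  | nil => exact IsConj.refl 1
  | cons x s =>
    rw [cyclicPairs_cons, telescope]
    exact isConj_iff.2 ⟨(h x)⁻¹, by rw [inv_inv]⟩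

end CyclicPairs

section CyclicLength

theorem cyclen_le_len (v : F) : cyclen v ≤ len v :=
  Nat.sInf_le ⟨1, by simp⟩

theorem exists_len_conj_eq_cyclen (v : F) : ∃ g : F, len (g * v * g⁻¹) = cyclen v :=
  Nat.sInf_mem (s := {n | ∃ g : F, len (g * v * g⁻¹) = n}) ⟨_, 1, rfl⟩

theorem cyclen_le_of_isConj {v w : F} (h : IsConj v w) : cyclen v ≤ cyclen w := by
  obtain ⟨c, rfl⟩ := isConj_iff.1 h
  obtain ⟨g, hg⟩ := exists_len_conj_eq_cyclen (c * v * c⁻¹)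
  exact hg ▸ Nat.sInf_le ⟨g * c, by group⟩

theorem cyclen_eq_of_isConj {v w : F} (h : IsConj v w) : cyclen v = cyclen w :=
  (cyclen_le_of_isConj h).antisymm (cyclen_le_of_isConj h.symm)

theorem freeGroup_norm_pow_le {α : Type*} [DecidableEq α] (x : FreeGroup α) (n : ℕ) :
    (x ^ n).norm ≤ n * x.norm := by
  induction n with
  | zero => simp
  | succ n ih =>
    rw [pow_succ, add_one_mul]
    exact (FreeGroup.norm_mul_le _ _).trans (by gcongr)

theorem norm_mk_pow_of_isCyclicallyReduced {α : Type*} [DecidableEq α] {w : List (α × Bool)}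
    (hw : FreeGroup.IsCyclicallyReduced w) (n : ℕ) :
    (FreeGroup.mk w ^ n).norm = n * w.length := by
  rw [FreeGroup.norm, FreeGroup.toWord_pow, FreeGroup.toWord_mk, hw.isReduced.reduce_eq,
    (hw.flatten_replicate n).isReduced.reduce_eq, List.length_flatten, List.map_replicate,
    List.sum_replicate, smul_eq_mul]

/- If `x = mk w` had a shorter conjugate `g * x * g⁻¹`, then the norm of `x ^ n`, which is
`n * w.length`, would grow too slowly. -/
theorem cyclen_mk_of_isCyclicallyReduced {w : List (Fin 2 × Bool)}
    (hw : FreeGroup.IsCyclicallyReduced w) : cyclen (FreeGroup.mk w) = w.length := by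
  refine ((cyclen_le_len _).trans FreeGroup.norm_mk_le).antisymm ?_
  obtain ⟨g, hg⟩ := exists_len_conj_eq_cyclen (FreeGroup.mk w)
  set y : F := g * FreeGroup.mk w * g⁻¹ with hy
  have hpow (n : ℕ) : n * w.length ≤ 2 * g.norm + n * y.norm :=
    calc n * w.length = (g⁻¹ * y ^ n * g).norm := by
          rw [hy, conj_pow, ← norm_mk_pow_of_isCyclicallyReduced hw]
          group
      _ ≤ g⁻¹.norm + (y ^ n).norm + g.norm :=
          (FreeGroup.norm_mul_le _ _).trans (by gcongr; exact FreeGroup.norm_mul_le _ _)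
      _ ≤ g.norm + n * y.norm + g.norm := by
          rw [FreeGroup.norm_inv_eq]
          gcongr
          exact freeGroup_norm_pow_le y n
      _ = 2 * g.norm + n * y.norm := by ring
  rw [← hg]
  change w.length ≤ y.norm
  by_contra! hlt
  nlinarith [hpow (2 * g.norm + 1)]

theorem exists_isConj_mk_isCyclicallyReduced {α : Type*} (v : FreeGroup α) :
    ∃ w, FreeGroup.IsCyclicallyReduced w ∧ IsConj v (FreeGroup.mk w) := by
  classical
  refine ⟨FreeGroup.reduceCyclically v.toWord,
    FreeGroup.reduceCyclically.isCyclicallyReduced FreeGroup.isReduced_toWord, ?_⟩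
  have h := congrArg FreeGroup.mk
    (FreeGroup.reduceCyclically.conj_conjugator_reduceCyclically v.toWord)
  rw [← FreeGroup.mul_mk, ← FreeGroup.mul_mk, ← FreeGroup.inv_mk, FreeGroup.mk_toWord] at h
  exact (isConj_iff.2 ⟨_, h⟩).symm

theorem isConj_mk_rotate {α : Type*} (w : List (α × Bool)) (n : ℕ) :
    IsConj (FreeGroup.mk w) (FreeGroup.mk (w.rotate n)) := by
  induction n generalizing w with
  | zero => rw [List.rotate_zero]
  | succ n ih =>
    cases w with
    | nil => exact IsConj.refl _
    | cons x s =>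
      rw [List.rotate_cons_succ]
      refine .trans ?_ (ih _)
      rw [← List.singleton_append, ← FreeGroup.mul_mk, ← FreeGroup.mul_mk]
      exact isConj_iff.2 ⟨(FreeGroup.mk [x])⁻¹, by group⟩

theorem forall_mem_zip_iff_isChain {α : Type*} (R : α → α → Prop) (s : List α) (x y : α) :
    (∀ p ∈ (x :: s).zip (s ++ [y]), R p.1 p.2) ↔ List.IsChain R (x :: s ++ [y]) := by
  induction s generalizing x with
  | nil => simp
  | cons z s ih =>
    rw [List.cons_append (a := z), List.zip_cons_cons, List.forall_mem_cons, ih]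
    simp only [List.cons_append, List.isChain_cons_cons]

theorem isCyclicallyReduced_iff_forall_cyclicPairs {α : Type*} (w : List (α × Bool)) :
    FreeGroup.IsCyclicallyReduced w ↔
      ∀ p ∈ cyclicPairs w, p.1.1 = p.2.1 → p.1.2 = p.2.2 := by
  cases w with
  | nil => simp [cyclicPairs]
  | cons x s =>
    rw [cyclicPairs_cons,
      forall_mem_zip_iff_isChain (fun a b : α × Bool => a.1 = b.1 → a.2 = b.2),
      FreeGroup.isCyclicallyReduced_iff, FreeGroup.IsReduced, List.isChain_append]
    simp

theorem isCyclicallyReduced_rotate {α : Type*} {w : List (α × Bool)} (n : ℕ)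
    (hw : FreeGroup.IsCyclicallyReduced w) : FreeGroup.IsCyclicallyReduced (w.rotate n) := by
  rw [isCyclicallyReduced_iff_forall_cyclicPairs] at hw ⊢
  simpa only [cyclicPairs_rotate, List.mem_rotate] using hw

end CyclicLength

section Syllables

/-- The two generating automorphisms, indexed so that `gen i` moves the generator `i` and fixes the
other generator `i.rev`. -/
def gen : Fin 2 → MulAut F := ![σ, τ]

theorem gen_of (i : Fin 2) : gen i (.of i) = .of i * .of i.rev := by
  fin_cases i <;> simp [gen, σ, τ, mkAut, ga, gb]

theorem gen_of_rev (i : Fin 2) : gen i (.of i.rev) = .of i.rev := by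
  fin_cases i <;> simp [gen, σ, τ, mkAut, ga, gb]

theorem gen_zpow_of_rev (i : Fin 2) (n : ℤ) : (gen i ^ n) (.of i.rev) = .of i.rev :=
  zpow_mem (K := MulAction.stabilizer (MulAut F) (FreeGroup.of i.rev)) (gen_of_rev i) n

theorem gen_zpow_of (i : Fin 2) (n : ℤ) : (gen i ^ n) (.of i) = .of i * .of i.rev ^ n := by
  have step (m : ℤ) : (gen i ^ (m + 1)) (.of i) = (gen i ^ m) (.of i) * .of i.rev := by
    rw [zpow_add_one, MulAut.mul_apply, gen_of, map_mul, gen_zpow_of_rev]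
  induction n using Int.induction_on with
  | zero => simp
  | succ n ih => rw [step, ih, mul_assoc, zpow_add_one]
  | pred n ih =>
    have h := step (-n - 1)
    rw [sub_add_cancel, ih] at h
    rw [zpow_sub_one (FreeGroup.of i.rev), ← mul_assoc, h, mul_inv_cancel_right]

/-- The exponent of a letter `(j, ε)`: `1` for a generator and `-1` for its inverse. -/
def sgn (ε : Bool) : ℤ := if ε then 1 else -1

theorem mk_singleton_eq_zpow (j : Fin 2) (ε : Bool) :
    (FreeGroup.mk [(j, ε)] : F) = .of j ^ sgn ε := by
  cases ε
  · rw [sgn, if_neg Bool.false_ne_true, zpow_neg_one]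
    rfl
  · rw [sgn, if_pos rfl, zpow_one]
    rfl

theorem mk_flatMap {α β : Type*} (f : β → List (α × Bool)) (r : List β) :
    FreeGroup.mk (r.flatMap f) = (r.map fun x => FreeGroup.mk (f x)).prod := by
  induction r with
  | nil => rfl
  | cons x r ih => rw [List.flatMap_cons, ← FreeGroup.mul_mk, ih, List.map_cons, List.prod_cons]

/-- The reduced word of the `k`-th power of the generator `j`. -/
def powWord (j : Fin 2) (k : ℤ) : List (Fin 2 × Bool) :=
  List.replicate k.natAbs (j, decide (0 ≤ k))

theorem mk_powWord (j : Fin 2) (k : ℤ) : (FreeGroup.mk (powWord j k) : F) = .of j ^ k := by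
  have hword : powWord j k =
      (List.replicate k.natAbs ()).flatMap fun _ => [(j, decide (0 ≤ k))] := by
    simp [powWord, List.flatMap_replicate]
  rw [hword, mk_flatMap, List.map_replicate, List.prod_replicate, mk_singleton_eq_zpow,
    ← zpow_natCast, ← zpow_mul]
  congr 1
  rcases le_or_gt 0 k with hk | hk
  · simp [sgn, hk]
  · simp [sgn, hk.not_ge, abs_of_neg hk]

/-- The word `x^{±1} y^k` encoded by a syllable `(±, k)`, where `x` is the generator `i` and `y` is
the other generator. -/
def syllableWord (i : Fin 2) (x : Bool × ℤ) : List (Fin 2 × Bool) :=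
  (i, x.1) :: powWord i.rev x.2

theorem mk_syllableWord (i : Fin 2) (x : Bool × ℤ) :
    (FreeGroup.mk (syllableWord i x) : F) = .of i ^ sgn x.1 * .of i.rev ^ x.2 := by
  rw [syllableWord, ← List.singleton_append, ← FreeGroup.mul_mk, mk_singleton_eq_zpow, mk_powWord]

/-- The exponent that `gen i` adds to the power of the generator `i.rev` standing between letters
`x^{±1}` and `x^{±1}` of signs `ε` and `ε'`, where `x` is the generator `i`. -/
def turn (ε ε' : Bool) : ℤ := if ε = ε' then sgn ε else 0

/-- The action of `gen i ^ n` on cyclic words, in terms of syllables. -/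
def twist (n : ℤ) (r : List (Bool × ℤ)) : List (Bool × ℤ) :=
  (cyclicPairs r).map fun p => (p.1.1, p.1.2 + n * turn p.1.1 p.2.1)

/- Letting the power of `i.rev` inserted in front of an inverse letter migrate to the preceding
syllable amounts to conjugating each factor by a function of the sign. -/
theorem isConj_gen_zpow_mk_twist (i : Fin 2) (n : ℤ) (r : List (Bool × ℤ)) :
    IsConj ((gen i ^ n) (FreeGroup.mk (r.flatMap (syllableWord i))))
      (FreeGroup.mk ((twist n r).flatMap (syllableWord i))) := by
  set migrate : Bool × ℤ → F := fun x => if x.1 then 1 else .of i.rev ^ (-n)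
  have hfactor (p : (Bool × ℤ) × (Bool × ℤ)) :
      FreeGroup.mk (syllableWord i (p.1.1, p.1.2 + n * turn p.1.1 p.2.1)) =
        (migrate p.1)⁻¹ * (gen i ^ n) (FreeGroup.mk (syllableWord i p.1)) * migrate p.2 := by
    obtain ⟨⟨ε, k⟩, ⟨ε', k'⟩⟩ := p
    simp only [mk_syllableWord, map_mul, map_zpow, gen_zpow_of, gen_zpow_of_rev, migrate]
    cases ε <;> cases ε' <;> simp only [turn, sgn, reduceIte, reduceCtorEq] <;> group
  simp only [mk_flatMap, map_list_prod, List.map_map, twist, Function.comp_def, hfactor]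
  exact isConj_prod_cyclicPairs _ migrate r

/-- Reducedness of the cyclic word encoded by a list of syllables: no letter `x^{±1}` is followed
by its inverse. -/
def IsReducedSyllables (r : List (Bool × ℤ)) : Prop :=
  ∀ p ∈ cyclicPairs r, p.1.2 = 0 → p.1.1 = p.2.1

theorem IsReducedSyllables.twist {r : List (Bool × ℤ)} (hr : IsReducedSyllables r) (n : ℤ) :
    IsReducedSyllables (twist n r) := by
  intro q hq
  rw [_root_.twist, cyclicPairs_map] at hq
  obtain ⟨⟨p, p'⟩, hp, rfl⟩ := List.mem_map.1 hq
  obtain ⟨hmem, hpp'⟩ := mem_cyclicPairs_cyclicPairs hp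
  intro hzero
  change p.1.1 = p'.1.1
  rw [← hpp']
  by_contra hne
  exact hne (hr p hmem (by simpa [turn, hne] using hzero))

theorem zip_replicate_succ {α : Type*} (a b x : α) (m : ℕ) :
    (a :: List.replicate (m + 1) x).zip (List.replicate (m + 1) x ++ [b]) =
      (a, x) :: (List.replicate m (x, x) ++ [(x, b)]) := by
  rw [List.replicate_succ, List.cons_append, List.zip_cons_cons, ← List.replicate_succ,
    List.replicate_succ', List.zip_append (by simp), List.zip_replicate']
  rfl

theorem cyclicPairs_flatMap_syllableWord (i : Fin 2) (r : List (Bool × ℤ)) :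
    cyclicPairs (r.flatMap (syllableWord i)) = (cyclicPairs r).flatMap fun p =>
      (syllableWord i p.1).zip (powWord i.rev p.1.2 ++ [(i, p.2.1)]) :=
  cyclicPairs_flatMap (fun x : Bool × ℤ => (i, x.1)) (fun x => powWord i.rev x.2) r

end Syllables

section NormalForm

theorem ne_rev (i : Fin 2) : i ≠ i.rev := by
  revert i
  decide

theorem eq_rev_of_ne {i j : Fin 2} (h : j ≠ i) : j = i.rev := by
  revert i j
  decide

theorem zip_syllableWord_zero (i : Fin 2) (ε ε' : Bool) :
    (syllableWord i (ε, 0)).zip (powWord i.rev 0 ++ [(i, ε')]) = [((i, ε), (i, ε'))] := rfl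

theorem zip_syllableWord_of_ne_zero (i : Fin 2) (ε ε' : Bool) {k : ℤ} (hk : k ≠ 0) :
    (syllableWord i (ε, k)).zip (powWord i.rev k ++ [(i, ε')]) =
      ((i, ε), (i.rev, decide (0 ≤ k))) ::
        (List.replicate (k.natAbs - 1) ((i.rev, decide (0 ≤ k)), (i.rev, decide (0 ≤ k))) ++
          [((i.rev, decide (0 ≤ k)), (i, ε'))]) := by
  rw [← zip_replicate_succ, Nat.sub_add_cancel (Int.natAbs_pos.2 hk)]
  rfl

theorem isCyclicallyReduced_flatMap_syllableWord (i : Fin 2) (r : List (Bool × ℤ)) :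
    FreeGroup.IsCyclicallyReduced (r.flatMap (syllableWord i)) ↔ IsReducedSyllables r := by
  rw [isCyclicallyReduced_iff_forall_cyclicPairs, cyclicPairs_flatMap_syllableWord,
    List.forall_mem_flatMap]
  refine forall₂_congr fun p _ => ?_
  obtain ⟨⟨ε, k⟩, ⟨ε', k'⟩⟩ := p
  by_cases hk : k = 0
  · subst hk
    simp [zip_syllableWord_zero]
  · simp [zip_syllableWord_of_ne_zero i ε ε' hk, hk, List.mem_replicate, or_imp, forall_and,
      ne_rev i, (ne_rev i).symm]

theorem powWord_sgn_mul (j : Fin 2) (s : Bool) (n : ℕ) :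
    powWord j (sgn s * (n + 1)) = List.replicate (n + 1) (j, s) := by
  have hsign : decide (0 ≤ sgn s * (n + 1)) = s := by cases s <;> simp [sgn] <;> omega
  have habs : (sgn s * (n + 1)).natAbs = n + 1 := by cases s <;> simp [sgn] <;> omega
  rw [powWord, hsign, habs]

theorem exists_eq_powWord {j : Fin 2} {w : List (Fin 2 × Bool)} (hw : FreeGroup.IsReduced w)
    (hj : ∀ x ∈ w, x.1 = j) : ∃ k, w = powWord j k := by
  have hconst : w.IsChain (· = ·) := by
    refine (List.isChain_iff_forall_rel_of_append_cons_cons.2 ?_)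
    rintro x y s t rfl
    have hxy : x.1 = y.1 := (hj x (by simp)).trans (hj y (by simp)).symm
    exact Prod.ext hxy (List.isChain_iff_forall_rel_of_append_cons_cons.1 hw rfl hxy)
  obtain _ | ⟨⟨j', s⟩, t⟩ := w
  · exact ⟨0, rfl⟩
  · obtain rfl : j' = j := hj _ List.mem_cons_self
    rw [List.isChain_cons_eq_iff_eq_replicate] at hconst
    exact ⟨sgn s * (t.length + 1), by rw [powWord_sgn_mul, List.replicate_succ, ← hconst]⟩

theorem exists_eq_powWord_append_flatMap (i : Fin 2) {w : List (Fin 2 × Bool)}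
    (hw : FreeGroup.IsReduced w) :
    ∃ (k : ℤ) (r : List (Bool × ℤ)), w = powWord i.rev k ++ r.flatMap (syllableWord i) := by
  induction w with
  | nil => exact ⟨0, [], rfl⟩
  | cons x t ih =>
    obtain ⟨k, r, rfl⟩ := ih hw.tail
    obtain ⟨j, ε⟩ := x
    obtain rfl | hj := eq_or_ne j i
    · exact ⟨0, (ε, k) :: r, rfl⟩
    · obtain rfl := eq_rev_of_ne hj
      obtain ⟨k', hk'⟩ := exists_eq_powWord (j := i.rev) (w := (i.rev, ε) :: powWord i.rev k)
        (hw.infix ⟨[], r.flatMap (syllableWord i), by simp⟩) (by simp [powWord])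
      exact ⟨k', r, by rw [← hk', List.cons_append]⟩

theorem exists_eq_powWord_or_rotate_eq_flatMap (i : Fin 2) {w : List (Fin 2 × Bool)}
    (hw : FreeGroup.IsCyclicallyReduced w) :
    (∃ k, w = powWord i.rev k) ∨
      ∃ (n : ℕ) (r : List (Bool × ℤ)),
        IsReducedSyllables r ∧ w.rotate n = r.flatMap (syllableWord i) := by
  by_cases hi : ∃ ε, (i, ε) ∈ w
  · right
    obtain ⟨ε, hε⟩ := hi
    obtain ⟨s, t, rfl⟩ := List.append_of_mem hε
    have hrot := isCyclicallyReduced_rotate s.length hw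
    rw [List.rotate_append_length_eq, List.cons_append] at hrot
    obtain ⟨k, r, hr⟩ := exists_eq_powWord_append_flatMap i hrot.isReduced.tail
    refine ⟨s.length, (ε, k) :: r, ?_⟩
    rw [← isCyclicallyReduced_flatMap_syllableWord i, List.flatMap_cons, syllableWord,
      List.cons_append, ← hr, List.rotate_append_length_eq]
    exact ⟨hrot, rfl⟩
  · refine .inl (exists_eq_powWord hw.isReduced fun x hx => eq_rev_of_ne ?_)
    rintro rfl
    exact hi ⟨x.2, hx⟩

end NormalForm

section LengthChange

theorem isConj_map {G : Type*} [Group G] (φ : MulAut G) {v w : G} (h : IsConj v w) :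
    IsConj (φ v) (φ w) :=
  φ.toMonoidHom.map_isConj h

theorem gen_zpow_mk_powWord (i : Fin 2) (n k : ℤ) :
    (gen i ^ n) (FreeGroup.mk (powWord i.rev k)) = FreeGroup.mk (powWord i.rev k) := by
  rw [mk_powWord, map_zpow, gen_zpow_of_rev]

/-- The length of the word encoded by a list of syllables. -/
def syllablesLength (r : List (Bool × ℤ)) : ℕ := (r.map fun x => x.2.natAbs + 1).sum

theorem cyclen_mk_flatMap_syllableWord (i : Fin 2) {r : List (Bool × ℤ)}
    (hr : IsReducedSyllables r) :
    cyclen (FreeGroup.mk (r.flatMap (syllableWord i))) = syllablesLength r := by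
  rw [cyclen_mk_of_isCyclicallyReduced ((isCyclicallyReduced_flatMap_syllableWord i r).2 hr),
    List.length_flatMap]
  simp only [syllablesLength, syllableWord, powWord, List.length_cons, List.length_replicate]

theorem cyclen_gen_zpow_mk_flatMap_syllableWord (i : Fin 2) (n : ℤ) {r : List (Bool × ℤ)}
    (hr : IsReducedSyllables r) :
    cyclen ((gen i ^ n) (FreeGroup.mk (r.flatMap (syllableWord i)))) =
      syllablesLength (twist n r) := by
  rw [cyclen_eq_of_isConj (isConj_gen_zpow_mk_twist i n r),
    cyclen_mk_flatMap_syllableWord i (hr.twist n)]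

/-- The contribution of two consecutive letters to the change of length under `gen i ^ sgn s`,
which inserts a letter `(i.rev, s)` after each letter `(i, true)` and its inverse before each letter
`(i, false)`: an insertion counts `1`, or `-1` when it cancels a letter. -/
def defect (i : Fin 2) (s : Bool) (p : (Fin 2 × Bool) × (Fin 2 × Bool)) : ℤ :=
  (if p.1 = (i, true) then if p.2 = (i.rev, !s) then -1 else 1 else 0) +
    if p.2 = (i, false) then if p.1 = (i.rev, s) then -1 else 1 else 0

theorem sum_defect_syllable (i : Fin 2) (s ε ε' : Bool) {k : ℤ} (hk : k = 0 → ε = ε') :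
    (((syllableWord i (ε, k)).zip (powWord i.rev k ++ [(i, ε')])).map (defect i s)).sum =
      (k + sgn s * turn ε ε').natAbs - k.natAbs := by
  have hi := ne_rev i
  obtain rfl | hk' := eq_or_ne k 0
  · obtain rfl := hk rfl
    rw [zip_syllableWord_zero]
    cases s <;> cases ε <;> simp [defect, turn, sgn, hi]
  · rw [zip_syllableWord_of_ne_zero i ε ε' hk']
    have hsign : decide (0 ≤ k) = true ∧ 0 < k ∨ decide (0 ≤ k) = false ∧ k < 0 := by
      simp only [decide_eq_true_eq, decide_eq_false_iff_not]
      omega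
    rcases hsign with ⟨hd, hpos⟩ | ⟨hd, hneg⟩ <;> rw [hd] <;> cases s <;> cases ε <;> cases ε' <;>
      simp [defect, turn, sgn, hi.symm, -Nat.cast_natAbs] <;> omega

theorem sum_defect_flatMap_syllableWord (i : Fin 2) (s : Bool) {r : List (Bool × ℤ)}
    (hr : IsReducedSyllables r) :
    syllablesLength r + ((cyclicPairs (r.flatMap (syllableWord i))).map (defect i s)).sum =
      syllablesLength (twist (sgn s) r) := by
  rw [cyclicPairs_flatMap_syllableWord, List.map_flatMap, List.flatMap_def, List.sum_flatten,
    List.map_map, syllablesLength, syllablesLength, twist, List.map_map, Nat.cast_list_sum,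
    Nat.cast_list_sum, List.map_map, List.map_map, ← sum_cyclicPairs_fst, ← List.sum_map_add]
  refine congrArg List.sum (List.map_congr_left fun p hp => ?_)
  simp only [Function.comp_apply, sum_defect_syllable i s _ _ (hr p hp)]
  push_cast
  ring

theorem cyclen_gen_zpow_sgn_mk (i : Fin 2) (s : Bool) {w : List (Fin 2 × Bool)}
    (hw : FreeGroup.IsCyclicallyReduced w) :
    (cyclen ((gen i ^ sgn s) (FreeGroup.mk w)) : ℤ) =
      w.length + ((cyclicPairs w).map (defect i s)).sum := by
  rcases exists_eq_powWord_or_rotate_eq_flatMap i hw with ⟨k, rfl⟩ | ⟨n, r, hr, hrot⟩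
  · rw [gen_zpow_mk_powWord, cyclen_mk_of_isCyclicallyReduced hw, powWord, cyclicPairs_replicate,
      List.map_replicate]
    simp [defect, (ne_rev i).symm]
  · have hperm : ((cyclicPairs (w.rotate n)).map (defect i s)).Perm
        ((cyclicPairs w).map (defect i s)) := by
      rw [cyclicPairs_rotate]
      exact ((cyclicPairs w).rotate_perm n).map _
    rw [cyclen_eq_of_isConj (isConj_map (gen i ^ sgn s) (isConj_mk_rotate w n)), ← hperm.sum_eq,
      ← cyclen_mk_of_isCyclicallyReduced hw, cyclen_eq_of_isConj (isConj_mk_rotate w n), hrot,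
      cyclen_gen_zpow_mk_flatMap_syllableWord i _ hr, cyclen_mk_flatMap_syllableWord i hr,
      sum_defect_flatMap_syllableWord i s hr]

end LengthChange

section Convexity

/-- The number of the indices `i`, `j` that are equal to the common generator of two consecutive
letters; it measures the convexity of the cyclic length along `gen i`, `gen j`. -/
def excess (i j : Fin 2) (p : (Fin 2 × Bool) × (Fin 2 × Bool)) : ℕ :=
  if p.1.1 = p.2.1 then (if p.1.1 = i then 1 else 0) + (if p.1.1 = j then 1 else 0) else 0

/-- The function of a letter whose coboundary is the difference between the sum of the defects of
`gen j` and `(gen i)⁻¹` and the excess. -/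
def defectPotential (i j : Fin 2) (x : Fin 2 × Bool) : ℤ :=
  if i ≠ j ∧ x.2 = decide (x.1 = i) then 1 else 0

theorem defect_add_defect (i j : Fin 2) {p : (Fin 2 × Bool) × (Fin 2 × Bool)}
    (hp : p.1.1 = p.2.1 → p.1.2 = p.2.2) :
    defect j true p + defect i false p + defectPotential i j p.1 =
      excess i j p + defectPotential i j p.2 := by
  revert i j p
  decide

theorem cyclen_gen_add_cyclen_gen_inv (i j : Fin 2) {w : List (Fin 2 × Bool)}
    (hw : FreeGroup.IsCyclicallyReduced w) :
    cyclen (gen j (FreeGroup.mk w)) + cyclen ((gen i)⁻¹ (FreeGroup.mk w)) =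
      2 * cyclen (FreeGroup.mk w) + ((cyclicPairs w).map (excess i j)).sum := by
  have hj := cyclen_gen_zpow_sgn_mk j true hw
  have hi := cyclen_gen_zpow_sgn_mk i false hw
  rw [show sgn true = 1 from rfl, zpow_one] at hj
  rw [show sgn false = -1 from rfl, zpow_neg_one] at hi
  have hsum : ((cyclicPairs w).map (defect j true)).sum + ((cyclicPairs w).map (defect i false)).sum
      + (w.map (defectPotential i j)).sum =
      ((cyclicPairs w).map (excess i j)).sum + (w.map (defectPotential i j)).sum := by
    nth_rw 1 [← sum_cyclicPairs_fst (defectPotential i j) w]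
    rw [← sum_cyclicPairs_snd (defectPotential i j) w, Nat.cast_list_sum, List.map_map,
      ← List.sum_map_add, ← List.sum_map_add, ← List.sum_map_add]
    exact congrArg List.sum (List.map_congr_left fun p hp => defect_add_defect i j
      ((isCyclicallyReduced_iff_forall_cyclicPairs w).1 hw p hp))
  rw [cyclen_mk_of_isCyclicallyReduced hw]
  omega

theorem two_mul_cyclen_le (i j : Fin 2) (v : F) :
    2 * cyclen v ≤ cyclen (gen j v) + cyclen ((gen i)⁻¹ v) := by
  obtain ⟨w, hw, hv⟩ := exists_isConj_mk_isCyclicallyReduced v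
  rw [cyclen_eq_of_isConj hv, cyclen_eq_of_isConj (isConj_map (gen j) hv),
    cyclen_eq_of_isConj (isConj_map (gen i)⁻¹ hv), cyclen_gen_add_cyclen_gen_inv i j hw]
  exact Nat.le_add_right _ _

theorem fst_ne_of_cyclen_add_cyclen_eq {i j : Fin 2} {w : List (Fin 2 × Bool)}
    (hw : FreeGroup.IsCyclicallyReduced w)
    (hflat : cyclen (gen j (FreeGroup.mk w)) + cyclen ((gen i)⁻¹ (FreeGroup.mk w)) =
      2 * cyclen (FreeGroup.mk w))
    {p : (Fin 2 × Bool) × (Fin 2 × Bool)} (hp : p ∈ cyclicPairs w) (hsame : p.1.1 = p.2.1) :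
    p.1.1 ≠ i ∧ p.1.1 ≠ j := by
  rw [cyclen_gen_add_cyclen_gen_inv i j hw, Nat.add_eq_left, List.sum_eq_zero_iff] at hflat
  have hzero : excess i j p = 0 := hflat _ (List.mem_map_of_mem hp)
  simpa [excess, hsame] using hzero

end Convexity

section FixedClasses

theorem turn_eq_zero_or_one_or_neg_one (ε ε' : Bool) :
    turn ε ε' = 0 ∨ turn ε ε' = 1 ∨ turn ε ε' = -1 := by
  revert ε ε'
  decide

theorem twist_eq_self (n : ℤ) {r : List (Bool × ℤ)}
    (hr : ∀ p ∈ cyclicPairs r, turn p.1.1 p.2.1 = 0) : twist n r = r := by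
  conv_rhs => rw [← map_fst_cyclicPairs r]
  exact List.map_congr_left fun p hp => by rw [hr p hp, mul_zero, add_zero]

theorem isConj_gen_self {i : Fin 2} {v : F}
    (hv : ∀ r, IsReducedSyllables r → IsConj v (FreeGroup.mk (r.flatMap (syllableWord i))) →
      ∀ p ∈ cyclicPairs r, turn p.1.1 p.2.1 = 0) : IsConj (gen i v) v := by
  obtain ⟨w, hw, hvw⟩ := exists_isConj_mk_isCyclicallyReduced v
  refine ((isConj_map (gen i) hvw).trans ?_).trans hvw.symm
  rcases exists_eq_powWord_or_rotate_eq_flatMap i hw with ⟨k, rfl⟩ | ⟨n, r, hr, hrot⟩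
  · rw [← zpow_one (gen i), gen_zpow_mk_powWord]
  · have hwr := isConj_mk_rotate w n
    rw [hrot] at hwr
    have htwist := isConj_gen_zpow_mk_twist i 1 r
    rw [twist_eq_self 1 (hv r hr (hvw.trans hwr)), zpow_one] at htwist
    exact ((isConj_map (gen i) hwr).trans htwist).trans hwr.symm

theorem natAbs_lt_syllablesLength {x : Bool × ℤ} {r : List (Bool × ℤ)} (hx : x ∈ r) :
    x.2.natAbs < syllablesLength r :=
  List.single_le_sum (fun _ _ => Nat.zero_le _) _
    (List.mem_map_of_mem (f := fun x : Bool × ℤ => x.2.natAbs + 1) hx)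

/- A syllable `(ε, k)` with nonzero turn becomes `(ε, k ± n)`, and `n ≤ |k| + |k ± n|`. -/
theorem isConj_gen_of_cyclen_pow_lt {i : Fin 2} {v : F} {n : ℕ}
    (hn : cyclen v + cyclen ((gen i ^ n) v) < n) : IsConj (gen i v) v := by
  refine isConj_gen_self fun r hr hv p hp => ?_
  have hlen := cyclen_eq_of_isConj (isConj_map (gen i ^ n) hv)
  rw [← zpow_natCast, cyclen_gen_zpow_mk_flatMap_syllableWord i n hr, zpow_natCast] at hlen
  rw [cyclen_eq_of_isConj hv, cyclen_mk_flatMap_syllableWord i hr, hlen] at hn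
  have hbefore : p.1.2.natAbs < syllablesLength r :=
    natAbs_lt_syllablesLength (List.of_mem_zip hp).1
  have hafter : (p.1.2 + n * turn p.1.1 p.2.1).natAbs < syllablesLength (twist n r) :=
    natAbs_lt_syllablesLength (x := (p.1.1, _)) (List.mem_map.2 ⟨p, hp, rfl⟩)
  rcases turn_eq_zero_or_one_or_neg_one p.1.1 p.2.1 with h | h | h <;> rw [h] at hafter ⊢ <;> omega

theorem exists_cyclicPairs_flatMap_syllableWord (i : Fin 2) {x : Bool × ℤ} {r : List (Bool × ℤ)}
    (hx : x ∈ r) : ∃ ε, ∀ q ∈ (syllableWord i x).zip (powWord i.rev x.2 ++ [(i, ε)]),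
      q ∈ cyclicPairs (r.flatMap (syllableWord i)) := by
  rw [← map_fst_cyclicPairs r] at hx
  obtain ⟨p, hp, rfl⟩ := List.mem_map.1 hx
  rw [cyclicPairs_flatMap_syllableWord]
  exact ⟨p.2.1, fun q hq => List.mem_flatMap_of_mem hp hq⟩

theorem ne_zero_of_forall_cyclicPairs {i : Fin 2} {r : List (Bool × ℤ)}
    (hr : ∀ q ∈ cyclicPairs (r.flatMap (syllableWord i)), q.1.1 = q.2.1 → q.1.1 ≠ i)
    {x : Bool × ℤ} (hx : x ∈ r) : x.2 ≠ 0 := by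
  obtain ⟨ε, hε⟩ := exists_cyclicPairs_flatMap_syllableWord i hx
  obtain ⟨ε', k⟩ := x
  rintro rfl
  rw [zip_syllableWord_zero] at hε
  exact hr _ (hε _ List.mem_cons_self) rfl rfl

theorem natAbs_le_one_of_forall_cyclicPairs {i : Fin 2} {r : List (Bool × ℤ)}
    (hr : ∀ q ∈ cyclicPairs (r.flatMap (syllableWord i)), q.1.1 = q.2.1 → q.1.1 ≠ i.rev)
    {x : Bool × ℤ} (hx : x ∈ r) : x.2.natAbs ≤ 1 := by
  obtain ⟨ε, hε⟩ := exists_cyclicPairs_flatMap_syllableWord i hx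
  obtain ⟨ε', k⟩ := x
  by_contra! hk
  have hk0 : k ≠ 0 := by
    rintro rfl
    simp at hk
  rw [zip_syllableWord_of_ne_zero i ε' ε hk0] at hε
  refine hr ((i.rev, decide (0 ≤ k)), (i.rev, decide (0 ≤ k))) (hε _ ?_) rfl rfl
  exact List.mem_cons_of_mem _ (List.mem_append_left _ (List.mem_replicate.2 ⟨by omega, rfl⟩))

theorem turn_eq_zero_of_syllablesLength_twist_one {r : List (Bool × ℤ)}
    (hone : ∀ x ∈ r, x.2.natAbs = 1) (hne : ∀ x ∈ twist 1 r, x.2 ≠ 0)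
    (hlen : syllablesLength (twist 1 r) = syllablesLength r)
    {p : (Bool × ℤ) × (Bool × ℤ)} (hp : p ∈ cyclicPairs r) : turn p.1.1 p.2.1 = 0 := by
  have hgrow (q) (hq : q ∈ cyclicPairs r) :
      q.1.2.natAbs + (turn q.1.1 q.2.1).natAbs = (q.1.2 + 1 * turn q.1.1 q.2.1).natAbs := by
    have hq1 : q.1.2.natAbs = 1 := hone _ (List.of_mem_zip hq).1
    have hq0 : q.1.2 + 1 * turn q.1.1 q.2.1 ≠ 0 :=
      hne (q.1.1, _) (List.mem_map.2 ⟨q, hq, rfl⟩)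
    rcases turn_eq_zero_or_one_or_neg_one q.1.1 q.2.1 with h | h | h <;> rw [h] at hq0 ⊢ <;> omega
  rw [syllablesLength, syllablesLength, twist, List.map_map,
    ← sum_cyclicPairs_fst (fun x => x.2.natAbs + 1) r] at hlen
  by_contra hturn
  refine hlen.not_gt (List.sum_lt_sum _ _ (fun q hq => ?_) ⟨p, hp, ?_⟩)
  · have := hgrow q hq
    simp only [Function.comp_apply]
    omega
  · have := hgrow p hp
    simp only [Function.comp_apply]
    omega

/- Flatness at `v` makes every syllable `(ε, ±1)`, and flatness at `gen i v` forbids that a nonzero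
turn cancels it; a nonzero turn would then lengthen the word. -/
theorem isConj_gen_of_cyclen_eq {i s : Fin 2} {v : F} (hinv : cyclen ((gen i.rev)⁻¹ v) = cyclen v)
    (hi : cyclen (gen i v) = cyclen v) (hs : cyclen (gen s (gen i v)) = cyclen v) :
    IsConj (gen i v) v := by
  refine isConj_gen_self fun r hr hv p hp => ?_
  have hv' : IsConj (gen i v) (FreeGroup.mk ((twist 1 r).flatMap (syllableWord i))) := by
    have htwist := isConj_gen_zpow_mk_twist i 1 r
    rw [zpow_one] at htwist
    exact (isConj_map (gen i) hv).trans htwist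
  have hlen := cyclen_eq_of_isConj hv
  have hlen' := cyclen_eq_of_isConj hv'
  have hback := cyclen_eq_of_isConj (isConj_map (gen i)⁻¹ hv')
  rw [MulAut.inv_apply_self] at hback
  have hne {q} := fst_ne_of_cyclen_add_cyclen_eq (i := i.rev) (j := i) (p := q)
    ((isCyclicallyReduced_flatMap_syllableWord i r).2 hr) (by
      rw [← cyclen_eq_of_isConj (isConj_map (gen i) hv),
        ← cyclen_eq_of_isConj (isConj_map (gen i.rev)⁻¹ hv)]
      omega)
  have hne' {q} := fst_ne_of_cyclen_add_cyclen_eq (i := i) (j := s) (p := q)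
    ((isCyclicallyReduced_flatMap_syllableWord i (twist 1 r)).2 (hr.twist 1)) (by
      rw [← cyclen_eq_of_isConj (isConj_map (gen s) hv')]
      omega)
  rw [cyclen_mk_flatMap_syllableWord i hr] at hlen
  rw [cyclen_mk_flatMap_syllableWord i (hr.twist 1)] at hlen'
  refine turn_eq_zero_of_syllablesLength_twist_one (fun x hx => ?_)
    (fun x hx => ne_zero_of_forall_cyclicPairs (fun q hq h => (hne' hq h).1) hx) (by omega) hp
  exact le_antisymm (natAbs_le_one_of_forall_cyclicPairs (fun q hq h => (hne hq h).1) hx)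
    (Int.natAbs_pos.2 (ne_zero_of_forall_cyclicPairs (fun q hq h => (hne hq h).2) hx))

end FixedClasses

section ConvexSequences

variable {f : ℕ → ℕ} {N L t : ℕ}

theorem lt_of_convex_of_lt_succ
    (hf : ∀ t, t + 2 ≤ N → 2 * f (t + 1) ≤ f t + f (t + 2))
    (ht : f t < f (t + 1)) (m : ℕ) (hm : t + m + 1 ≤ N) :
    m < f (t + m + 1) ∧ f (t + m) < f (t + m + 1) := by
  induction m with
  | zero => exact ⟨Nat.zero_lt_of_lt ht, ht⟩
  | succ m ih =>
    have hprev := ih (by omega)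
    have hmid : 2 * f (t + m + 1) ≤ f (t + m) + f (t + m + 1 + 1) := hf (t + m) (by omega)
    rw [← add_assoc]
    omega

theorem succ_le_of_convex (hf : ∀ t, t + 2 ≤ N → 2 * f (t + 1) ≤ f t + f (t + 2))
    (hN : f N ≤ L) (ht : t + L < N) : f (t + 1) ≤ f t := by
  by_contra! hlt
  have hgrowth := (lt_of_convex_of_lt_succ hf hlt (N - t - 1) (by omega)).1
  rw [show t + (N - t - 1) + 1 = N by omega] at hgrowth
  omega

theorem le_succ_of_convex (hf : ∀ t, t + 2 ≤ N → 2 * f (t + 1) ≤ f t + f (t + 2))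
    (h0 : f 0 ≤ L) (hL : L ≤ t) (ht : t < N) : f t ≤ f (t + 1) := by
  have hrefl (s : ℕ) (hs : s + 2 ≤ N) :
      2 * f (N - (s + 1)) ≤ f (N - s) + f (N - (s + 2)) := by
    have h := hf (N - (s + 2)) (by omega)
    rw [show N - (s + 2) + 1 = N - (s + 1) by omega, show N - (s + 2) + 2 = N - s by omega] at h
    omega
  have h := succ_le_of_convex (f := fun s => f (N - s)) hrefl (L := L) (t := N - (t + 1))
    (by simpa using h0) (by omega)
  simpa only [show N - (N - (t + 1) + 1) = t by omega, show N - (N - (t + 1)) = t + 1 by omega]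
    using h

theorem le_of_convex (hf : ∀ t, t + 2 ≤ N → 2 * f (t + 1) ≤ f t + f (t + 2))
    (h0 : f 0 ≤ L) (hN : f N ≤ L) (ht : t + L ≤ N) : f t ≤ L := by
  induction t with
  | zero => exact h0
  | succ t ih => exact (succ_le_of_convex hf hN (by omega)).trans (ih (by omega))

end ConvexSequences

section Chains

/-- The product of the generating automorphisms indexed by the letters of `l`; these products are
the chains of type (C1), and their lengths are those of the lists. -/
def genProd (l : List (Fin 2)) : MulAut F := (l.map gen).prod

theorem genProd_cons_apply (i : Fin 2) (l : List (Fin 2)) (u : F) :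
    genProd (i :: l) u = gen i (genProd l u) := rfl

theorem genProd_append (l m : List (Fin 2)) : genProd (l ++ m) = genProd l * genProd m := by
  rw [genProd, List.map_append, List.prod_append, genProd, genProd]

theorem genProd_replicate (n : ℕ) (i : Fin 2) : genProd (List.replicate n i) = gen i ^ n := by
  rw [genProd, List.map_replicate, List.prod_replicate]

theorem exists_chainC1_eq_genProd (c : List (ℕ × ℕ)) :
    ∃ l : List (Fin 2), l.length = chainLen c ∧ chainC1 c = genProd l := by
  induction c with
  | nil => exact ⟨[], rfl, rfl⟩
  | cons x c ih =>
    obtain ⟨l, hlen, hl⟩ := ih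
    refine ⟨List.replicate x.2 1 ++ (List.replicate x.1 0 ++ l), ?_, ?_⟩
    · simp only [List.length_append, List.length_replicate, hlen, chainLen, sigmaCount, tauCount,
        List.map_cons, List.sum_cons]
      omega
    · rw [genProd_append, genProd_append, genProd_replicate, genProd_replicate, ← hl, ← mul_assoc]
      rfl

theorem exists_genProd_eq_chainC1 (l : List (Fin 2)) :
    ∃ c : List (ℕ × ℕ), c ≠ [] ∧ chainLen c = l.length ∧ chainC1 c = genProd l := by
  induction l with
  | nil => exact ⟨[(0, 0)], List.cons_ne_nil _ _, rfl, rfl⟩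
  | cons i l ih =>
    obtain ⟨c, -, hlen, hc⟩ := ih
    refine ⟨(if i = 0 then (1, 0) else (0, 1)) :: c, List.cons_ne_nil _ _, ?_, ?_⟩
    · rw [List.length_cons, ← hlen]
      simp only [chainLen, sigmaCount, tauCount, List.map_cons, List.sum_cons]
      split_ifs <;> omega
    · rw [chainC1, List.map_cons, List.prod_cons, ← chainC1, hc]
      fin_cases i <;> rfl

theorem two_mul_cyclen_genProd_drop_le (l : List (Fin 2)) (u : F) (t : ℕ)
    (ht : t + 2 ≤ l.length) :
    2 * cyclen (genProd (l.drop (t + 1)) u) ≤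
      cyclen (genProd (l.drop t) u) + cyclen (genProd (l.drop (t + 2)) u) := by
  rw [List.drop_eq_getElem_cons (i := t) (by omega),
    List.drop_eq_getElem_cons (i := t + 1) (by omega), genProd_cons_apply l[t]]
  convert two_mul_cyclen_le l[t + 1] l[t] (genProd (l[t + 1] :: l.drop (t + 2)) u) using 3
  rw [genProd_cons_apply, MulAut.inv_apply_self]

variable {u : F} {L : ℕ}

theorem cyclen_genProd_le (hu : cyclen u ≤ L) {p q : List (Fin 2)}
    (hpq : cyclen (genProd (p ++ q) u) ≤ L) (hq : L ≤ q.length) : cyclen (genProd q u) ≤ L := by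
  simpa using le_of_convex (f := fun t => cyclen (genProd ((p ++ q).drop t) u))
    (two_mul_cyclen_genProd_drop_le (p ++ q) u) hpq (by rw [List.drop_length]; exact hu)
    (t := p.length) (by simpa using hq)

theorem cyclen_genProd_cons_eq (hu : cyclen u ≤ L) {p q : List (Fin 2)} {i : Fin 2}
    (hpq : cyclen (genProd (p ++ i :: q) u) ≤ L) (hp : L ≤ p.length) (hq : L ≤ q.length) :
    cyclen (genProd (i :: q) u) = cyclen (genProd q u) := by
  let f (t : ℕ) : ℕ := cyclen (genProd ((p ++ i :: q).drop t) u)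
  have hconv := two_mul_cyclen_genProd_drop_le (p ++ i :: q) u
  have hle : f (p.length + 1) ≤ f p.length := succ_le_of_convex hconv (L := L)
    (by simp only [f, List.drop_length]; exact hu) (by simp; omega)
  have hge : f p.length ≤ f (p.length + 1) := le_succ_of_convex hconv hpq hp (by simp)
  simp only [f, List.drop_left, List.drop_length_add_append, List.drop_one, List.tail_cons]
    at hle hge
  exact le_antisymm hge hle

theorem isConj_gen_genProd_of_replicate (hu : cyclen u ≤ L) {p q : List (Fin 2)} {i : Fin 2}
    (hpq : cyclen (genProd (p ++ (List.replicate (2 * L + 1) i ++ q)) u) ≤ L)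
    (hq : L ≤ q.length) : IsConj (gen i (genProd q u)) (genProd q u) := by
  have hafter := cyclen_genProd_le hu hpq (by simp; omega)
  have hbefore := cyclen_genProd_le hu (p := p ++ List.replicate (2 * L + 1) i)
    (by rwa [List.append_assoc]) hq
  rw [genProd_append, genProd_replicate, MulAut.mul_apply] at hafter
  exact isConj_gen_of_cyclen_pow_lt (n := 2 * L + 1) (by omega)

theorem isConj_gen_genProd_of_ne (hu : cyclen u ≤ L) {p q : List (Fin 2)} {i j : Fin 2}
    (hij : i ≠ j) (hpq : cyclen (genProd (p ++ i :: j :: q) u) ≤ L)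
    (hp : L < p.length) (hq : L ≤ q.length) :
    IsConj (gen i (genProd (j :: q) u)) (genProd (j :: q) u) := by
  obtain ⟨p', s, rfl⟩ := (List.eq_nil_or_concat' p).resolve_left
    (List.ne_nil_of_length_pos (by omega))
  obtain rfl := eq_rev_of_ne hij.symm
  rw [List.length_append, List.length_singleton] at hp
  have hj := cyclen_genProd_cons_eq hu (p := p' ++ [s, i]) (i := i.rev) (q := q)
    (by simpa using hpq) (by simp; omega) hq
  have hi := cyclen_genProd_cons_eq hu (p := p' ++ [s]) (i := i) (q := i.rev :: q) hpq
    (by simp; omega) (by simp; omega)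
  have hs := cyclen_genProd_cons_eq hu (p := p') (i := s) (q := i :: i.rev :: q)
    (by simpa using hpq) (by omega) (by simp; omega)
  refine isConj_gen_of_cyclen_eq ?_ hi (hs.trans hi)
  rw [hj, genProd_cons_apply, MulAut.inv_apply_self]

theorem isConj_genProd_append {p q : List (Fin 2)} {i : Fin 2}
    (h : IsConj (gen i (genProd q u)) (genProd q u)) :
    IsConj (genProd (p ++ q) u) (genProd (p ++ i :: q) u) := by
  rw [genProd_append, genProd_append]
  exact isConj_map (genProd p) h.symm

theorem exists_isConj_gen_genProd {l : List (Fin 2)} (hl : 4 * L + 2 ≤ l.length) :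
    ∃ p i q, l = p ++ i :: q ∧ ∀ u, cyclen u ≤ L → cyclen (genProd l u) ≤ L →
      IsConj (gen i (genProd q u)) (genProd q u) := by
  obtain ⟨p, m, q, rfl, hp, hm, hq⟩ : ∃ p m q, l = p ++ (m ++ q) ∧ L < p.length ∧
      m.length = 2 * L + 1 ∧ L ≤ q.length :=
    ⟨l.take (L + 1), (l.drop (L + 1)).take (2 * L + 1), (l.drop (L + 1)).drop (2 * L + 1),
      by simp only [List.take_append_drop], by simp; omega, by simp; omega, by simp; omega⟩
  by_cases hchain : m.IsChain (· = ·)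
  · obtain ⟨i, rfl⟩ : ∃ i, m = List.replicate (2 * L + 1) i := by
      obtain ⟨i, t, rfl⟩ := List.exists_cons_of_length_pos (l := m) (by omega)
      rw [List.isChain_cons_eq_iff_eq_replicate] at hchain
      exact ⟨i, by rw [← hm, List.length_cons, List.replicate_succ, ← hchain]⟩
    refine ⟨p ++ List.replicate (2 * L) i, i, q, ?_, fun u hu hl => ?_⟩
    · rw [List.replicate_succ', List.append_assoc, List.append_assoc, List.singleton_append]
    · exact isConj_gen_genProd_of_replicate hu hl hq
  · obtain ⟨i, j, s, t, rfl, hij⟩ : ∃ i j s t, m = s ++ i :: j :: t ∧ i ≠ j := by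
      contrapose! hchain
      exact List.isChain_iff_forall_rel_of_append_cons_cons.2 fun _ _ _ _ h => hchain _ _ _ _ h
    refine ⟨p ++ s, i, j :: t ++ q, by simp, fun u hu hl => ?_⟩
    exact isConj_gen_genProd_of_ne hu (p := p ++ s) (q := t ++ q) hij (by simpa using hl)
      (by simp; omega) (by simp; omega)

end Chains

theorem stmt14_general {ι : Type*} (u : ι → F) (L : ℕ) (c : List (ℕ × ℕ))
    (hlen : 4 * L + 2 ≤ chainLen c) (hu : ∀ i, cyclen (u i) ≤ L)
    (hc : ∀ i, cyclen (chainC1 c (u i)) ≤ L) :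
    ∃ c' : List (ℕ × ℕ), c' ≠ [] ∧ chainLen c' < chainLen c ∧
      ∀ i, IsConj (chainC1 c' (u i)) (chainC1 c (u i)) := by
  obtain ⟨l, hl, hcl⟩ := exists_chainC1_eq_genProd c
  rw [hcl] at hc
  obtain ⟨p, j, q, rfl, hj⟩ := exists_isConj_gen_genProd (hlen.trans_eq hl.symm)
  obtain ⟨c', hne, hlen', hc'⟩ := exists_genProd_eq_chainC1 (p ++ q)
  refine ⟨c', hne, ?_, fun i => ?_⟩
  · rw [hlen', ← hl]
    simp
  · rw [hc', hcl]
    exact isConj_genProd_append (hj (u i) (hu i) (hc i))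

/-- Theorem 5.3:  a chain of type (C1) of length `≥ 4L+5` fixing the cyclic lengths of
`u₁, …, u_k` can be replaced by a strictly shorter one acting the same up to conjugacy. -/
theorem stmt14 (k : ℕ) (hk : 0 < k) (u : Fin k → F) (L : ℕ)
    (hL : L = Finset.univ.sup fun i => len (u i))
    (c : List (ℕ × ℕ)) (hne : c ≠ []) (hlen : 4 * L + 5 ≤ chainLen c)
    (hfix : ∀ i, cyclen (chainC1 c (u i)) = cyclen (u i)) :
    ∃ c' : List (ℕ × ℕ), c' ≠ [] ∧ chainLen c' < chainLen c ∧
      ∀ i, IsConj (chainC1 c' (u i)) (chainC1 c (u i)) := by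
  have hu (i : Fin k) : cyclen (u i) ≤ L :=
    (cyclen_le_len _).trans (hL ▸ Finset.le_sup (f := fun i => len (u i)) (Finset.mem_univ i))
  exact stmt14_general u L c (by omega) hu fun i => (hfix i).trans_le (hu i)
end
end

section
/- Every automorphism φ of F₂ can be written as φ = β∘δ∘φ', where β is a Whitehead automorphism of type (W1), δ is a (possibly empty) composition of automorphisms from {δ₁, δ₂, δ₃, δ₄}, and φ' is a chain of type (C1) or of type (C2). -/
noncomputable section

/-!
An automorphism of minimal total length modulo Whitehead automorphisms of type (W1), inner
automorphisms and `σ` sends the basis to a Nielsen reduced one, where words cannot get shorter;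
hence its inverse is itself of type (W1). So `σ` generates the automorphism group together with the
group `K` of products of automorphisms of type (W1) and inner ones.

Up to factors in `K` on the left, an automorphism is therefore a word in `σ`, `τ` and their
inverses: moving a factor of `K` to the left past `σ` turns `σ` into one of `σ`, `σ⁻¹`, `τ`, `τ⁻¹`.
Mixed signs disappear because `σ τ⁻¹ σ` and `τ σ⁻¹ τ` lie in `K`: up to a factor in `K`, the product
`σ τ⁻¹` equals `σ⁻¹`.
-/

section GromovProduct

open FreeGroup (mk invRev)

/-- The length of the longest common prefix of two lists. -/
def commonPrefixLength {β : Type*} [DecidableEq β] : List β → List β → ℕ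
  | x :: L, y :: M => if x = y then commonPrefixLength L M + 1 else 0
  | _, _ => 0

theorem le_commonPrefixLength_iff {β : Type*} [DecidableEq β] {k : ℕ} {L M : List β} :
    k ≤ commonPrefixLength L M ↔ k ≤ L.length ∧ k ≤ M.length ∧ L.take k = M.take k := by
  fun_induction commonPrefixLength L M generalizing k with
  | case1 L y M ih => cases k <;> simp [ih]
  | case2 x L y M hxy => cases k <;> simp [hxy]
  | case3 L M hLM =>
    rcases L with _ | ⟨x, L⟩
    · simp +contextual
    · rcases M with _ | ⟨y, M⟩
      · simp +contextual
      · exact (hLM x L y M rfl rfl).elim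

variable {α : Type*}

theorem isReduced_invRev_append {L M : List (α × Bool)}
    (hL : FreeGroup.IsReduced L) (hM : FreeGroup.IsReduced M)
    (hLM : ∀ x ∈ L.head?, ∀ y ∈ M.head?, x ≠ y) :
    FreeGroup.IsReduced (invRev L ++ M) := by
  classical
  have hL' : FreeGroup.IsReduced (invRev L) := by
    rw [FreeGroup.isReduced_iff_reduce_eq, FreeGroup.reduce_invRev, hL.reduce_eq]
  refine List.isChain_append.2 ⟨hL', hM, fun z hz y hy hzy => ?_⟩
  obtain ⟨x, hx, rfl⟩ : ∃ x ∈ L.head?, (x.1, !x.2) = z := by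
    simpa [invRev] using hz
  have := hLM x hx y hy
  grind

variable [DecidableEq α]

theorem norm_inv_mk_mul_mk_add_two_mul_commonPrefixLength {L M : List (α × Bool)}
    (hL : FreeGroup.IsReduced L) (hM : FreeGroup.IsReduced M) :
    FreeGroup.norm ((mk L)⁻¹ * mk M) + 2 * commonPrefixLength L M = L.length + M.length := by
  have norm_of_ne {L M : List (α × Bool)}
      (hL : FreeGroup.IsReduced L) (hM : FreeGroup.IsReduced M)
      (hLM : ∀ x ∈ L.head?, ∀ y ∈ M.head?, x ≠ y) :
      FreeGroup.norm ((mk L)⁻¹ * mk M) = L.length + M.length := by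
    rw [FreeGroup.inv_mk, FreeGroup.mul_mk, FreeGroup.norm, FreeGroup.toWord_mk,
      (isReduced_invRev_append hL hM hLM).reduce_eq, List.length_append, FreeGroup.invRev_length]
  fun_induction commonPrefixLength L M with
  | case1 L x M ih =>
    have cancel : (mk (x :: L))⁻¹ * mk (x :: M) = (mk L)⁻¹ * mk M := by
      rw [← List.singleton_append (l := L), ← List.singleton_append (l := M),
        ← FreeGroup.mul_mk, ← FreeGroup.mul_mk]
      group
    have := ih hL.tail hM.tail
    rw [cancel, List.length_cons, List.length_cons]
    lia
  | case2 x L y M hxy => rw [norm_of_ne hL hM (by simpa using hxy), mul_zero, add_zero]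
  | case3 L M hLM =>
    rw [norm_of_ne hL hM, mul_zero, add_zero]
    rcases L with _ | ⟨x, L⟩
    · simp
    · rcases M with _ | ⟨y, M⟩
      · simp
      · exact (hLM x L y M rfl rfl).elim

/-- The Gromov product of two elements of a free group with respect to the identity: the length of
the common initial segment of their reduced words, so that `gromovProd x⁻¹ y` letters of each factor
cancel in the product `x * y`. -/
def gromovProd (x y : FreeGroup α) : ℕ :=
  commonPrefixLength x.toWord y.toWord

theorem norm_inv_mul_add_two_mul_gromovProd (x y : FreeGroup α) :
    (x⁻¹ * y).norm + 2 * gromovProd x y = x.norm + y.norm := by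
  have := norm_inv_mk_mul_mk_add_two_mul_commonPrefixLength (FreeGroup.isReduced_toWord (x := x))
    (FreeGroup.isReduced_toWord (x := y))
  rwa [FreeGroup.mk_toWord, FreeGroup.mk_toWord] at this

theorem norm_mul_add_two_mul_gromovProd (x y : FreeGroup α) :
    (x * y).norm + 2 * gromovProd x⁻¹ y = x.norm + y.norm := by
  simpa using norm_inv_mul_add_two_mul_gromovProd x⁻¹ y

theorem gromovProd_comm (x y : FreeGroup α) : gromovProd x y = gromovProd y x :=
  eq_of_forall_le_iff fun k => by
    simp only [gromovProd, le_commonPrefixLength_iff]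
    tauto

theorem gromovProd_le_left (x y : FreeGroup α) : gromovProd x y ≤ x.norm :=
  (le_commonPrefixLength_iff.1 le_rfl).1

theorem min_gromovProd_le (x y z : FreeGroup α) :
    min (gromovProd x y) (gromovProd y z) ≤ gromovProd x z := by
  obtain ⟨hx, -, hxy⟩ :=
    le_commonPrefixLength_iff.1 (min_le_left (gromovProd x y) (gromovProd y z))
  obtain ⟨-, hz, hyz⟩ :=
    le_commonPrefixLength_iff.1 (min_le_right (gromovProd x y) (gromovProd y z))
  exact le_commonPrefixLength_iff.2 ⟨hx, hz, hxy.trans hyz⟩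

theorem exists_norm_eq_and_gromovProd_eq {x : FreeGroup α} {k : ℕ} (hk : k ≤ x.norm) :
    ∃ q : FreeGroup α, q.norm = k ∧ gromovProd q x = k := by
  have toWord_take : (mk (x.toWord.take k)).toWord = x.toWord.take k := by
    rw [FreeGroup.toWord_mk]
    exact (FreeGroup.isReduced_toWord.infix (List.take_prefix k _).isInfix).reduce_eq
  have norm_take : (mk (x.toWord.take k)).norm = k := by
    rw [FreeGroup.norm, toWord_take]
    exact List.length_take_of_le hk
  refine ⟨_, norm_take, le_antisymm ((gromovProd_le_left _ _).trans_eq norm_take) ?_⟩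
  rw [gromovProd, le_commonPrefixLength_iff]
  exact ⟨norm_take.ge, hk, by rw [toWord_take, List.take_take, min_self]⟩

open FreeGroup.reduceCyclically in
theorem norm_lt_norm_mul_self {x : FreeGroup α} (hx : x ≠ 1) : x.norm < (x * x).norm := by
  have word_eq := conj_conjugator_reduceCyclically x.toWord
  have word_sq_eq := reduce_flatten_replicate_succ (FreeGroup.isReduced_toWord (x := x)) 1
  set c := conjugator x.toWord
  set r := FreeGroup.reduceCyclically x.toWord
  have r_ne_nil : r ≠ [] := by
    intro hr
    apply hx
    rw [← FreeGroup.mk_toWord (x := x), ← word_eq, hr, List.append_nil, ← FreeGroup.mul_mk,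
      ← FreeGroup.inv_mk, mul_inv_cancel]
  have norm_eq : x.norm = 2 * c.length + r.length := by
    rw [FreeGroup.norm, ← word_eq]
    simp only [List.length_append, FreeGroup.invRev_length]
    ring
  have norm_sq_eq : (x * x).norm = 2 * c.length + 2 * r.length := by
    rw [FreeGroup.norm, ← pow_two, FreeGroup.toWord_pow, word_sq_eq]
    simp only [List.length_append, FreeGroup.invRev_length, List.length_flatten,
      List.map_replicate, List.sum_replicate, smul_eq_mul]
    ring
  have := List.length_pos_iff.2 r_ne_nil
  lia

theorem two_mul_gromovProd_inv_self_lt {x : FreeGroup α} (hx : x ≠ 1) :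
    2 * gromovProd x⁻¹ x < x.norm := by
  have := norm_mul_add_two_mul_gromovProd x x
  have := norm_lt_norm_mul_self hx
  lia

theorem gromovProd_inv_mul_of_lt {x y z : FreeGroup α}
    (h : gromovProd x⁻¹ y + gromovProd y⁻¹ z < y.norm) :
    gromovProd x⁻¹ (y * z) = gromovProd x⁻¹ y := by
  have lt_gromovProd : gromovProd x⁻¹ y < gromovProd y (y * z) := by
    have h₁ := norm_inv_mul_add_two_mul_gromovProd y (y * z)
    have h₂ := norm_mul_add_two_mul_gromovProd y z
    rw [inv_mul_cancel_left] at h₁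
    lia
  have h₁ := min_gromovProd_le x⁻¹ y (y * z)
  have h₂ := min_gromovProd_le x⁻¹ (y * z) y
  rw [gromovProd_comm (y * z) y] at h₂
  lia

theorem gromovProd_add_gromovProd_inv_inv_lt {u v : FreeGroup α} (hu : u ≠ 1)
    (h₁ : 2 * gromovProd v⁻¹ u ≤ u.norm) (h₂ : 2 * gromovProd u⁻¹ v⁻¹ ≤ u.norm) :
    gromovProd v⁻¹ u + gromovProd u⁻¹ v⁻¹ < u.norm := by
  have := two_mul_gromovProd_inv_self_lt hu
  have := min_gromovProd_le u⁻¹ v⁻¹ u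
  lia

-- Write `u = p * q⁻¹` with both halves of length `m`. The hypotheses say that `v` starts with `q`
-- and ends with `p⁻¹`, so conjugating by `q` does not lengthen `u` and makes `v * u` shorter
-- than `v`.
theorem exists_norm_conj_add_norm_conj_lt {u v : FreeGroup α} {m : ℕ} (hm : 0 < m)
    (hu : u.norm = 2 * m) (hv : 2 * m ≤ v.norm) (hvu : m ≤ gromovProd v⁻¹ u)
    (huv : m ≤ gromovProd u⁻¹ v) :
    ∃ q : FreeGroup α,
      (q⁻¹ * u * q).norm + (q⁻¹ * (v * u) * q).norm < u.norm + v.norm := by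
  obtain ⟨q, hq, hqv⟩ := exists_norm_eq_and_gromovProd_eq (x := v) (k := m) (by lia)
  obtain ⟨p, rfl⟩ : ∃ p, u = p * q⁻¹ := ⟨u * q, by group⟩
  have norm_p : p.norm = m := by
    have hqu := min_gromovProd_le q v (p * q⁻¹)⁻¹
    have h₁ := norm_inv_mul_add_two_mul_gromovProd q (p * q⁻¹)⁻¹
    have h₂ := FreeGroup.norm_mul_le p q⁻¹
    rw [gromovProd_comm v] at hqu
    rw [show q⁻¹ * (p * q⁻¹)⁻¹ = p⁻¹ by group] at h₁
    simp only [FreeGroup.norm_inv_eq] at h₁ h₂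
    lia
  have gromovProd_p : m ≤ gromovProd v⁻¹ p := by
    have h₁ := min_gromovProd_le v⁻¹ (p * q⁻¹) p
    have h₂ := norm_inv_mul_add_two_mul_gromovProd (p * q⁻¹) p
    rw [show (p * q⁻¹)⁻¹ * p = q by group] at h₂
    lia
  have gromovProd_q : m ≤ gromovProd q (v * p) := by
    have h₁ := min_gromovProd_le q v (v * p)
    have h₂ := norm_inv_mul_add_two_mul_gromovProd v (v * p)
    have h₃ := FreeGroup.norm_mul_le (v * p) p⁻¹
    rw [inv_mul_cancel_left] at h₂
    rw [mul_inv_cancel_right, FreeGroup.norm_inv_eq] at h₃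
    lia
  refine ⟨q, ?_⟩
  have norm_conj_u := FreeGroup.norm_mul_le q⁻¹ p
  have norm_vp := norm_mul_add_two_mul_gromovProd v p
  have norm_conj_vu := norm_inv_mul_add_two_mul_gromovProd q (v * p)
  rw [show q⁻¹ * (p * q⁻¹) * q = q⁻¹ * p by group,
    show q⁻¹ * (v * (p * q⁻¹)) * q = q⁻¹ * (v * p) by group]
  rw [FreeGroup.norm_inv_eq] at norm_conj_u
  lia

end GromovProduct

section NielsenReduced

open FreeGroup (mk)

variable {ι α : Type*} [DecidableEq α]

theorem map_mk_singleton_not {G : Type*} [Group G] (f : FreeGroup ι →* G) (x : ι × Bool) :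
    f (mk [(x.1, !x.2)]) = (f (mk [x]))⁻¹ := by
  rw [← map_inv]
  rfl

theorem norm_mk_singleton (x : α × Bool) : (mk [x]).norm = 1 := by
  simp [FreeGroup.norm]

/-- A homomorphism between free groups is Nielsen reduced if, for every reduced word `x * y * z` in
three letters, the letters of `f y` cancelled in the products `f x * f y` and `f y * f z` do not
exhaust `f y`. -/
def IsNielsenReduced (f : FreeGroup ι →* FreeGroup α) : Prop :=
  ∀ x y z : ι × Bool, FreeGroup.IsReduced [x, y, z] →
    gromovProd (f (mk [x]))⁻¹ (f (mk [y])) +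
      gromovProd (f (mk [y]))⁻¹ (f (mk [z])) < (f (mk [y])).norm

namespace IsNielsenReduced

variable {f : FreeGroup ι →* FreeGroup α}

theorem gromovProd_mk_cons_and_le_norm (hf : IsNielsenReduced f) (x y : ι × Bool)
    (L : List (ι × Bool)) (hL : FreeGroup.IsReduced (x :: y :: L)) :
    gromovProd (f (mk [x]))⁻¹ (f (mk (y :: L))) =
        gromovProd (f (mk [x]))⁻¹ (f (mk [y])) ∧
      gromovProd (f (mk [x]))⁻¹ (f (mk [y])) + (y :: L).length ≤ (f (mk (y :: L))).norm := by
  induction L generalizing x y with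
  | nil =>
    have := hf x y y (by simpa [FreeGroup.IsReduced] using hL)
    simp only [List.length_singleton, true_and]
    lia
  | cons z L ih =>
    obtain ⟨gromovProd_tail, le_norm_tail⟩ := ih y z hL.tail
    have mk_cons : f (mk (y :: z :: L)) = f (mk [y]) * f (mk (z :: L)) := by
      rw [← map_mul, FreeGroup.mul_mk, List.singleton_append]
    have hxyz := hf x y z (hL.infix (List.prefix_append [x, y, z] L).isInfix)
    have norm_cons := norm_mul_add_two_mul_gromovProd (f (mk [y])) (f (mk (z :: L)))
    rw [mk_cons, List.length_cons]
    exact ⟨gromovProd_inv_mul_of_lt (by lia), by lia⟩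

theorem norm_le [DecidableEq ι] (hf : IsNielsenReduced f) (w : FreeGroup ι) :
    w.norm ≤ (f w).norm := by
  have reduced := FreeGroup.isReduced_toWord (x := w)
  rw [← FreeGroup.mk_toWord (x := w), FreeGroup.norm, FreeGroup.toWord_mk, reduced.reduce_eq]
  cases hw : w.toWord with
  | nil => exact Nat.zero_le _
  | cons y L =>
    rw [hw] at reduced
    have := (hf.gromovProd_mk_cons_and_le_norm y y L
      (FreeGroup.isReduced_cons_cons.2 ⟨fun _ => rfl, reduced⟩)).2
    lia

end IsNielsenReduced

/-- A homomorphism from a free group of rank two is Nielsen minimal if, for letters `x` and `y` of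
different generators, replacing the images of `x` and `y` by those of `x` and `y * x` and then
conjugating both by `g` does not decrease their total length. -/
def IsNielsenMinimal (f : FreeGroup (Fin 2) →* FreeGroup α) : Prop :=
  ∀ x y : Fin 2 × Bool, x.1 ≠ y.1 → ∀ g : FreeGroup α,
    (f (mk [x])).norm + (f (mk [y])).norm ≤
      (g⁻¹ * f (mk [x]) * g).norm + (g⁻¹ * (f (mk [y]) * f (mk [x])) * g).norm

namespace IsNielsenMinimal

variable {f : FreeGroup (Fin 2) →* FreeGroup α} {x y : Fin 2 × Bool}

theorem two_mul_gromovProd_le_right (hf : IsNielsenMinimal f) (hxy : x.1 ≠ y.1) :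
    2 * gromovProd (f (mk [y]))⁻¹ (f (mk [x])) ≤ (f (mk [x])).norm := by
  have h₁ := hf x y hxy 1
  have h₂ := norm_mul_add_two_mul_gromovProd (f (mk [y])) (f (mk [x]))
  simp only [inv_one, one_mul, mul_one] at h₁
  lia

theorem two_mul_gromovProd_le_left (hf : IsNielsenMinimal f) (hxy : x.1 ≠ y.1) :
    2 * gromovProd (f (mk [x]))⁻¹ (f (mk [y])) ≤ (f (mk [x])).norm := by
  have := hf.two_mul_gromovProd_le_right (x := (x.1, !x.2)) (y := (y.1, !y.2)) hxy
  rwa [map_mk_singleton_not, map_mk_singleton_not, inv_inv, FreeGroup.norm_inv_eq,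
    gromovProd_comm] at this

theorem gromovProd_add_gromovProd_inv_lt (hf : IsNielsenMinimal f) (hxy : x.1 ≠ y.1)
    (hx : f (mk [x]) ≠ 1) :
    gromovProd (f (mk [y]))⁻¹ (f (mk [x])) +
      gromovProd (f (mk [x]))⁻¹ (f (mk [y])) < (f (mk [x])).norm := by
  have right_le := hf.two_mul_gromovProd_le_right hxy
  have left_le := hf.two_mul_gromovProd_le_left hxy
  have right_le' := hf.two_mul_gromovProd_le_left hxy.symm
  have norm_pos := Nat.pos_of_ne_zero (FreeGroup.norm_eq_zero.not.2 hx)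
  by_contra! hge
  obtain ⟨g, hg⟩ := exists_norm_conj_add_norm_conj_lt
    (u := f (mk [x])) (v := f (mk [y]))
    (m := gromovProd (f (mk [y]))⁻¹ (f (mk [x])))
    (by lia) (by lia) (by lia) le_rfl (by lia)
  exact (hf x y hxy g).not_gt hg

theorem isNielsenReduced (hf : IsNielsenMinimal f) (hf_inj : Function.Injective f) :
    IsNielsenReduced f := by
  intro x y z hxyz
  have map_ne_one : f (mk [y]) ≠ 1 := by
    rw [map_ne_one_iff f hf_inj, Ne, ← FreeGroup.norm_eq_zero, norm_mk_singleton]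
    exact one_ne_zero
  have self_lt := two_mul_gromovProd_inv_self_lt map_ne_one
  obtain ⟨hxy, hyz⟩ : (x.1 = y.1 → x.2 = y.2) ∧ (y.1 = z.1 → y.2 = z.2) := by
    simpa [FreeGroup.IsReduced] using hxyz
  by_cases hx : x.1 = y.1
  · obtain rfl : x = y := Prod.ext hx (hxy hx)
    by_cases hz : x.1 = z.1
    · obtain rfl : x = z := Prod.ext hz (hyz hz)
      lia
    · have := hf.two_mul_gromovProd_le_left hz
      lia
  · by_cases hz : y.1 = z.1
    · obtain rfl : y = z := Prod.ext hz (hyz hz)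
      have := hf.two_mul_gromovProd_le_right (Ne.symm hx)
      lia
    · obtain rfl | rfl : z = x ∨ z = (x.1, !x.2) :=
        have hzx : z.1 = x.1 := by lia
        (Bool.eq_or_eq_not z.2 x.2).imp (Prod.ext hzx) (Prod.ext hzx)
      · exact hf.gromovProd_add_gromovProd_inv_lt hz map_ne_one
      · have := hf.two_mul_gromovProd_le_left hz
        rw [map_mk_singleton_not] at this ⊢
        exact gromovProd_add_gromovProd_inv_inv_lt map_ne_one
          (hf.two_mul_gromovProd_le_right (Ne.symm hx)) this

end IsNielsenMinimal

end NielsenReduced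

section Chains

open scoped Pointwise

variable {G : Type*} [Group G]

/-- The products of copies of `s` and `t` together with the products of copies of `s⁻¹` and `t⁻¹`,
which is the abstract form of the chains of types (C1) and (C2). -/
def oneSignChains (s t : G) : Set G :=
  Submonoid.closure {s, t} ∪ Submonoid.closure {s⁻¹, t⁻¹}

theorem oneSignChains_comm (s t : G) : oneSignChains s t = oneSignChains t s := by
  rw [oneSignChains, oneSignChains, Set.pair_comm, Set.pair_comm s⁻¹]

theorem oneSignChains_inv (s t : G) : oneSignChains s⁻¹ t⁻¹ = oneSignChains s t := by
  rw [oneSignChains, oneSignChains, inv_inv, inv_inv, Set.union_comm]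

variable {K : Subgroup G} {s t : G}

-- If `p` starts with the wrong sign, its first factor is absorbed: `s * s⁻¹ = 1`, and
-- `s * t⁻¹ = (s * t⁻¹ * s) * s⁻¹`.
theorem mul_mem_mul_oneSignChains (hst : s * t⁻¹ * s ∈ K) {p : G} (hp : p ∈ oneSignChains s t) :
    s * p ∈ (K : Set G) * oneSignChains s t := by
  have mem_of_chain {q : G} (hq : q ∈ oneSignChains s t) : q ∈ (K : Set G) * oneSignChains s t :=
    ⟨1, one_mem K, q, hq, one_mul q⟩
  have s_mem : s ∈ Submonoid.closure {s, t} := Submonoid.subset_closure (Set.mem_insert _ _)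
  obtain hp | hp := hp
  · exact mem_of_chain (Or.inl (mul_mem s_mem hp))
  · cases hp using Submonoid.closure_induction_left with
    | one => exact mem_of_chain (Or.inl (by rwa [mul_one]))
    | mul_left x hx q hq =>
      obtain rfl | rfl := hx
      · exact mem_of_chain (Or.inr (by rwa [mul_inv_cancel_left]))
      · have s_inv_mem : s⁻¹ ∈ Submonoid.closure {s⁻¹, t⁻¹} :=
          Submonoid.subset_closure (Set.mem_insert _ _)
        exact ⟨s * t⁻¹ * s, hst, s⁻¹ * q, Or.inr (mul_mem s_inv_mem hq), by group⟩

theorem mul_mem_mul_oneSignChains_of_mem (hst : s * t⁻¹ * s ∈ K) (hts : t * s⁻¹ * t ∈ K) {x p : G}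
    (hx : x ∈ ({s, s⁻¹, t, t⁻¹} : Set G)) (hp : p ∈ oneSignChains s t) :
    x * p ∈ (K : Set G) * oneSignChains s t := by
  have inv_mem_of {s t : G} (h : s * t⁻¹ * s ∈ K) : s⁻¹ * t⁻¹⁻¹ * s⁻¹ ∈ K := by
    simpa [mul_assoc] using inv_mem h
  obtain rfl | rfl | rfl | rfl := hx
  · exact mul_mem_mul_oneSignChains hst hp
  · rw [← oneSignChains_inv] at hp ⊢
    exact mul_mem_mul_oneSignChains (inv_mem_of hst) hp
  · rw [oneSignChains_comm] at hp ⊢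
    exact mul_mem_mul_oneSignChains hts hp
  · rw [← oneSignChains_inv, oneSignChains_comm] at hp ⊢
    exact mul_mem_mul_oneSignChains (inv_mem_of hts) hp

theorem closure_insert_subset_mul_oneSignChains (hst : s * t⁻¹ * s ∈ K) (hts : t * s⁻¹ * t ∈ K)
    (hs_inv : ∃ r ∈ K, r * s * r⁻¹ = s⁻¹)
    (hs_mul : ∀ k ∈ K, s * k ∈ (K : Set G) * {s, s⁻¹, t, t⁻¹}) :
    (Subgroup.closure (insert s (K : Set G)) : Set G) ⊆ K * oneSignChains s t := by
  have mul_left_mem {k x : G} (hk : k ∈ K) (hx : x ∈ (K : Set G) * oneSignChains s t) :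
      k * x ∈ (K : Set G) * oneSignChains s t := by
    obtain ⟨l, hl, p, hp, rfl⟩ := hx
    exact ⟨k * l, mul_mem hk hl, p, hp, mul_assoc k l p⟩
  have s_mul_mem {x : G} (hx : x ∈ (K : Set G) * oneSignChains s t) :
      s * x ∈ (K : Set G) * oneSignChains s t := by
    obtain ⟨k, hk, p, hp, rfl⟩ := hx
    obtain ⟨l, hl, y, hy, hlyk⟩ := hs_mul k hk
    rw [← mul_assoc, ← hlyk, mul_assoc]
    exact mul_left_mem hl (mul_mem_mul_oneSignChains_of_mem hst hts hy hp)
  obtain ⟨r, hr, hrs⟩ := hs_inv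
  intro x hx
  induction hx using Subgroup.closure_induction_left with
  | one => exact ⟨1, one_mem K, 1, Or.inl (one_mem _), one_mul 1⟩
  | mul_left y hy x _ ih =>
    obtain rfl | hy := hy
    · exact s_mul_mem ih
    · exact mul_left_mem hy ih
  | inv_mul_cancel y hy x _ ih =>
    obtain rfl | hy := hy
    · rw [← hrs, mul_assoc, mul_assoc]
      exact mul_left_mem hr (s_mul_mem (mul_left_mem (inv_mem hr) ih))
    · exact mul_left_mem (inv_mem hy) ih

theorem exists_prod_pow_mul_pow_eq {M : Type*} [Monoid M] {s t p : M}
    (hp : p ∈ Submonoid.closure {s, t}) :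
    ∃ c : List (ℕ × ℕ), c ≠ [] ∧ p = (c.map fun q => t ^ q.2 * s ^ q.1).prod := by
  induction hp using Submonoid.closure_induction_left with
  | one => exact ⟨[(0, 0)], by simp⟩
  | mul_left x hx p _ ih =>
    obtain ⟨c, -, rfl⟩ := ih
    obtain rfl | rfl := hx
    · exact ⟨(1, 0) :: c, by simp⟩
    · exact ⟨(0, 1) :: c, by simp⟩

end Chains

section Automorphisms

open FreeGroup (mk invRev)

theorem mul_conj_eq {G : Type*} [Group G] (φ : MulAut G) (g : G) :
    φ * MulAut.conj g = MulAut.conj (φ g) * φ := by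
  ext x
  simp

instance normal_range_conj {G : Type*} [Group G] : (MulAut.conj : G →* MulAut G).range.Normal := by
  refine ⟨?_⟩
  rintro _ ⟨g, rfl⟩ φ
  exact ⟨φ g, by rw [mul_conj_eq, mul_inv_cancel_right]⟩

/-- The automorphism of a free group which sends the generator `i` to the generator `e i` if `s i`
is true, and to its inverse otherwise. -/
def signedPerm {α : Type*} (e : Equiv.Perm α) (s : α → Bool) : MulAut (FreeGroup α) :=
  MonoidHom.toMulEquiv
    (FreeGroup.lift fun i => mk [(e i, s i)])
    (FreeGroup.lift fun j => mk [(e.symm j, s (e.symm j))])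
    (by
      ext i
      cases hi : s i <;> simp [hi, FreeGroup.of, invRev])
    (by
      ext j
      cases hj : s (e.symm j) <;> simp [hj, FreeGroup.of, invRev])

theorem signedPerm_of {α : Type*} (e : Equiv.Perm α) (s : α → Bool) (i : α) :
    signedPerm e s (FreeGroup.of i) = mk [(e i, s i)] :=
  FreeGroup.lift_apply_of (f := fun i => mk [(e i, s i)])

end Automorphisms

section RankTwo

open FreeGroup (mk invRev)

open scoped Pointwise

theorem mkAut_ga {x y xi yi : F} {h1 h2 h3 h4} : mkAut x y xi yi h1 h2 h3 h4 ga = x := by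
  change FreeGroup.lift ![x, y] ga = x
  simp [ga]

theorem mkAut_gb {x y xi yi : F} {h1 h2 h3 h4} : mkAut x y xi yi h1 h2 h3 h4 gb = y := by
  change FreeGroup.lift ![x, y] gb = y
  simp [gb]

theorem mkAut_symm_ga {x y xi yi : F} {h1 h2 h3 h4} :
    (mkAut x y xi yi h1 h2 h3 h4).symm ga = xi := by
  change FreeGroup.lift ![xi, yi] ga = xi
  simp [ga]

theorem mkAut_symm_gb {x y xi yi : F} {h1 h2 h3 h4} :
    (mkAut x y xi yi h1 h2 h3 h4).symm gb = yi := by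
  change FreeGroup.lift ![xi, yi] gb = yi
  simp [gb]

@[simp] theorem σ_ga : σ ga = ga * gb := mkAut_ga
@[simp] theorem σ_gb : σ gb = gb := mkAut_gb
@[simp] theorem σ_symm_ga : σ.symm ga = ga * gb⁻¹ := mkAut_symm_ga
@[simp] theorem σ_symm_gb : σ.symm gb = gb := mkAut_symm_gb
@[simp] theorem τ_ga : τ ga = ga := mkAut_ga
@[simp] theorem τ_gb : τ gb = gb * ga := mkAut_gb
@[simp] theorem τ_symm_ga : τ.symm ga = ga := mkAut_symm_ga
@[simp] theorem τ_symm_gb : τ.symm gb = gb * ga⁻¹ := mkAut_symm_gb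
@[simp] theorem pi'_ga : pi' ga = gb := mkAut_ga
@[simp] theorem pi'_gb : pi' gb = ga⁻¹ := mkAut_gb
@[simp] theorem pi'_symm_ga : pi'.symm ga = gb⁻¹ := mkAut_symm_ga
@[simp] theorem pi'_symm_gb : pi'.symm gb = ga := mkAut_symm_gb

theorem mulAut_ext {φ ψ : MulAut F} (ha : φ ga = ψ ga) (hb : φ gb = ψ gb) : φ = ψ := by
  have hom_eq : φ.toMonoidHom = ψ.toMonoidHom := by
    ext i
    fin_cases i
    · exact ha
    · exact hb
  exact MulEquiv.toMonoidHom_injective hom_eq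

/-- The letters `a`, `a⁻¹`, `b`, `b⁻¹` of `F`. -/
def letters : Set F := {ga, ga⁻¹, gb, gb⁻¹}

theorem inv_mem_letters {w : F} (hw : w ∈ letters) : w⁻¹ ∈ letters := by
  obtain rfl | rfl | rfl | rfl := hw <;> simp [letters]

theorem mk_singleton_mem_letters (x : Fin 2 × Bool) : mk [x] ∈ letters := by
  obtain ⟨i, _ | _⟩ := x <;> fin_cases i <;>
    simp [letters, ga, gb, FreeGroup.of, invRev]

theorem mem_letters_of_norm_eq_one {w : F} (hw : w.norm = 1) : w ∈ letters := by
  obtain ⟨x, hx⟩ := List.length_eq_one_iff.1 hw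
  rw [← FreeGroup.mk_toWord (x := w), hx]
  exact mk_singleton_mem_letters x

/-- The group of Whitehead automorphisms of type (W1). -/
def signedPerms : Subgroup (MulAut F) :=
  MulAction.stabilizer (MulAut F) letters

theorem mem_signedPerms {β : MulAut F} : β ∈ signedPerms ↔ IsW1 β := by
  have letters_finite : letters.Finite := by simp [letters]
  rw [signedPerms, MulAction.mem_stabilizer_set' letters_finite]
  constructor
  · exact fun h => ⟨h (by simp [letters]), h (by simp [letters])⟩
  · rintro ⟨ha, hb⟩ w (rfl | rfl | rfl | rfl)
    · exact ha
    · rw [smul_inv']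
      exact inv_mem_letters ha
    · exact hb
    · rw [smul_inv']
      exact inv_mem_letters hb

theorem IsW1.apply_cases {β : MulAut F} (hβ : IsW1 β) :
    ((β ga = ga ∨ β ga = ga⁻¹) ∧ (β gb = gb ∨ β gb = gb⁻¹)) ∨
      ((β ga = gb ∨ β ga = gb⁻¹) ∧ (β gb = ga ∨ β gb = ga⁻¹)) := by
  have ga_ne_gb : ga ≠ gb := by simp [ga, gb, FreeGroup.of_injective.eq_iff]
  have ga_ne_gb_inv : ga ≠ gb⁻¹ := fun h => by
    simpa [ga, gb, invRev] using congrArg FreeGroup.toWord h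
  have map_ne : β ga ≠ β gb := β.injective.ne ga_ne_gb
  have map_ne_inv : β ga ≠ (β gb)⁻¹ := by
    rw [← map_inv]
    exact β.injective.ne ga_ne_gb_inv
  simp only [IsW1, Set.mem_insert_iff, Set.mem_singleton_iff] at hβ
  grind [inv_inv]

/-- The group generated by the Whitehead automorphisms of type (W1) and the inner automorphisms. -/
def signedPermsInner : Subgroup (MulAut F) :=
  signedPerms ⊔ (MulAut.conj : F →* MulAut F).range

theorem mem_signedPermsInner {κ : MulAut F} :
    κ ∈ signedPermsInner ↔ ∃ β, IsW1 β ∧ ∃ g, β * MulAut.conj g = κ := by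
  simp only [signedPermsInner, Subgroup.mem_sup_of_normal_right, mem_signedPerms,
    MonoidHom.mem_range, exists_exists_eq_and]

theorem conj_mul_mem_signedPermsInner (g : F) {β : MulAut F} (hβ : IsW1 β) :
    MulAut.conj g * β ∈ signedPermsInner :=
  mul_mem (Subgroup.mem_sup_right ⟨g, rfl⟩) (Subgroup.mem_sup_left (mem_signedPerms.2 hβ))

theorem exists_isW1_apply_eq {x y : Fin 2 × Bool} (hxy : x.1 ≠ y.1) :
    ∃ β, IsW1 β ∧ β ga = mk [x] ∧ β gb = mk [y] := by
  have ha : signedPerm (Equiv.swap 0 x.1) ![x.2, y.2] ga = mk [x] := by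
    simp [ga, signedPerm_of]
  have hb : signedPerm (Equiv.swap 0 x.1) ![x.2, y.2] gb = mk [y] := by
    have swap_one : ∀ i j : Fin 2, i ≠ j → Equiv.swap 0 i 1 = j := by decide
    simp [gb, signedPerm_of, swap_one x.1 y.1 hxy]
  refine ⟨_, ⟨?_, ?_⟩, ha, hb⟩
  · rw [ha]
    exact mk_singleton_mem_letters x
  · rw [hb]
    exact mk_singleton_mem_letters y

/-- The total length of the images of the two generators. -/
def totalNorm (φ : MulAut F) : ℕ :=
  (φ ga).norm + (φ gb).norm

theorem totalNorm_eq_norm_add_norm (φ : MulAut F) {x y : Fin 2 × Bool} (hxy : x.1 ≠ y.1) :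
    totalNorm φ = (φ (mk [x])).norm + (φ (mk [y])).norm := by
  have norm_map_letter (x : Fin 2 × Bool) :
      (φ (mk [x])).norm = (φ (FreeGroup.of x.1)).norm := by
    obtain ⟨i, _ | _⟩ := x
    · rw [← FreeGroup.norm_inv_eq, ← map_inv]
      rfl
    · rfl
  rw [norm_map_letter, norm_map_letter]
  obtain ⟨hx, hy⟩ | ⟨hx, hy⟩ : (x.1 = 0 ∧ y.1 = 1) ∨ (x.1 = 1 ∧ y.1 = 0) := by lia
  · rw [hx, hy, totalNorm, ga, gb]
  · rw [hx, hy, totalNorm, ga, gb, add_comm]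

/-- The group generated by `σ`, the Whitehead automorphisms of type (W1) and the inner
automorphisms. -/
def nielsenGroup : Subgroup (MulAut F) :=
  Subgroup.closure (insert σ signedPermsInner)

theorem signedPermsInner_le_nielsenGroup : signedPermsInner ≤ nielsenGroup :=
  fun _ hκ => Subgroup.subset_closure (Set.mem_insert_of_mem _ hκ)

theorem isNielsenMinimal_of_forall_totalNorm_le {ψ : MulAut F}
    (hψ : ∀ η ∈ nielsenGroup, totalNorm ψ ≤ totalNorm (ψ * η)) :
    IsNielsenMinimal ψ.toMonoidHom := by
  intro x y hxy g
  obtain ⟨ω, hω, ω_ga, ω_gb⟩ := exists_isW1_apply_eq hxy.symm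
  have mem : MulAut.conj (ψ.symm g⁻¹) * ω * σ ∈ nielsenGroup :=
    mul_mem (signedPermsInner_le_nielsenGroup (conj_mul_mem_signedPermsInner _ hω))
      (Subgroup.subset_closure (Set.mem_insert _ _))
  have totalNorm_mul : totalNorm (ψ * (MulAut.conj (ψ.symm g⁻¹) * ω * σ)) =
      (g⁻¹ * (ψ (mk [y]) * ψ (mk [x])) * g).norm + (g⁻¹ * ψ (mk [x]) * g).norm := by
    simp [-FreeGroup.mul_mk, totalNorm, ω_ga, ω_gb]
  have totalNorm_le := hψ _ mem
  rwa [totalNorm_eq_norm_add_norm ψ hxy, totalNorm_mul,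
    add_comm (FreeGroup.norm (g⁻¹ * (_ * _) * g))] at totalNorm_le

theorem isW1_inv_of_isNielsenReduced {ψ : MulAut F} (hψ : IsNielsenReduced ψ.toMonoidHom) :
    IsW1 ψ⁻¹ := by
  have norm_inv_apply_of (i : Fin 2) : (ψ⁻¹ (FreeGroup.of i)).norm = 1 := by
    have le_one : (ψ⁻¹ (FreeGroup.of i)).norm ≤ 1 := by
      simpa using hψ.norm_le (ψ⁻¹ (FreeGroup.of i))
    have ne_zero : (ψ⁻¹ (FreeGroup.of i)).norm ≠ 0 := by
      simp
    lia
  exact ⟨mem_letters_of_norm_eq_one (norm_inv_apply_of 0),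
    mem_letters_of_norm_eq_one (norm_inv_apply_of 1)⟩

theorem nielsenGroup_eq_top : nielsenGroup = ⊤ := by
  refine (Subgroup.eq_top_iff' _).2 fun φ => ?_
  induction φ using (measure totalNorm).wf.induction with
  | _ φ ih =>
    by_cases! hφ : ∀ η ∈ nielsenGroup, totalNorm φ ≤ totalNorm (φ * η)
    · have reduced := (isNielsenMinimal_of_forall_totalNorm_le hφ).isNielsenReduced φ.injective
      have inv_mem := mem_signedPerms.2 (isW1_inv_of_isNielsenReduced reduced)
      exact inv_mem_iff.1 (signedPermsInner_le_nielsenGroup (Subgroup.mem_sup_left inv_mem))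
    · obtain ⟨η, hη, totalNorm_lt⟩ := hφ
      exact (mul_mem_cancel_right hη).1 (ih _ totalNorm_lt)

end RankTwo

section Relations

open scoped Pointwise

theorem σ_mul_τ_inv_mul_σ_mem : σ * τ⁻¹ * σ ∈ signedPermsInner := by
  have eq_conj_mul : σ * τ⁻¹ * σ = MulAut.conj ga * pi' :=
    mulAut_ext (by simp [mul_assoc]) (by simp)
  rw [eq_conj_mul]
  exact conj_mul_mem_signedPermsInner ga (by simp [IsW1])

theorem τ_mul_σ_inv_mul_τ_mem : τ * σ⁻¹ * τ ∈ signedPermsInner := by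
  have eq_conj_mul : τ * σ⁻¹ * τ = MulAut.conj gb * pi'⁻¹ :=
    mulAut_ext (by simp) (by simp [mul_assoc])
  rw [eq_conj_mul]
  exact conj_mul_mem_signedPermsInner gb (by simp [IsW1])

theorem exists_conj_σ_eq_inv : ∃ ρ ∈ signedPermsInner, ρ * σ * ρ⁻¹ = σ⁻¹ := by
  obtain ⟨ρ, hρ, ρ_ga, ρ_gb⟩ :=
    exists_isW1_apply_eq (x := (0, true)) (y := (1, false)) Fin.zero_ne_one
  replace ρ_ga : ρ ga = ga := ρ_ga
  replace ρ_gb : ρ gb = gb⁻¹ := ρ_gb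
  exact ⟨ρ, Subgroup.mem_sup_left (mem_signedPerms.2 hρ), mul_inv_eq_of_eq_mul
    (mulAut_ext (by simp [ρ_ga, ρ_gb]) (by simp [ρ_gb]))⟩

theorem IsW1.exists_σ_mul_eq {β : MulAut F} (hβ : IsW1 β) :
    ∃ g : F, ∃ t ∈ ({σ, σ⁻¹, τ, τ⁻¹} : Set (MulAut F)), σ * β = β * MulAut.conj g * t := by
  have of_apply {g : F} {t : MulAut F} (ht : t ∈ ({σ, σ⁻¹, τ, τ⁻¹} : Set (MulAut F)))
      (hgt : σ (β ga) = β (MulAut.conj g (t ga)) ∧ σ (β gb) = β (MulAut.conj g (t gb))) :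
      ∃ g : F, ∃ t ∈ ({σ, σ⁻¹, τ, τ⁻¹} : Set (MulAut F)), σ * β = β * MulAut.conj g * t :=
    ⟨g, t, ht, mulAut_ext hgt.1 hgt.2⟩
  obtain ⟨ha | ha, hb | hb⟩ | ⟨ha | ha, hb | hb⟩ := hβ.apply_cases
  · exact of_apply (g := 1) (t := σ) (by simp) (by simp [ha, hb])
  · exact of_apply (g := 1) (t := σ⁻¹) (by simp) (by simp [ha, hb])
  · exact of_apply (g := gb⁻¹) (t := σ⁻¹) (by simp) (by simp [ha, hb, mul_assoc])
  · exact of_apply (g := gb) (t := σ) (by simp) (by simp [ha, hb, mul_assoc])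
  · exact of_apply (g := 1) (t := τ) (by simp) (by simp [ha, hb])
  · exact of_apply (g := ga⁻¹) (t := τ⁻¹) (by simp) (by simp [ha, hb, mul_assoc])
  · exact of_apply (g := 1) (t := τ⁻¹) (by simp) (by simp [ha, hb])
  · exact of_apply (g := ga) (t := τ) (by simp) (by simp [ha, hb, mul_assoc])

theorem σ_mul_mem {κ : MulAut F} (hκ : κ ∈ signedPermsInner) :
    σ * κ ∈ (signedPermsInner : Set (MulAut F)) * {σ, σ⁻¹, τ, τ⁻¹} := by
  obtain ⟨β, hβ, h, rfl⟩ := mem_signedPermsInner.1 hκ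
  obtain ⟨g, t, ht, hgt⟩ := hβ.exists_σ_mul_eq
  refine ⟨β * MulAut.conj (g * t h), mem_signedPermsInner.2 ⟨β, hβ, _, rfl⟩, t, ht, ?_⟩
  calc β * MulAut.conj (g * t h) * t = β * MulAut.conj g * (MulAut.conj (t h) * t) := by
        rw [map_mul]; group
    _ = σ * (β * MulAut.conj h) := by
        rw [← mul_conj_eq, ← mul_assoc, ← hgt, mul_assoc]

theorem isC1_or_isC2_of_mem_oneSignChains {p : MulAut F} (hp : p ∈ oneSignChains σ τ) :
    IsC1 p ∨ IsC2 p := by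
  refine hp.imp exists_prod_pow_mul_pow_eq fun hp => ?_
  simpa only [IsC2, chainC2, inv_pow] using exists_prod_pow_mul_pow_eq hp

theorem exists_prod_δIdx_eq_conj (g : F) :
    ∃ ds : List (Fin 4), (ds.map δIdx).prod = MulAut.conj g := by
  have δ₁_eq : δ₁ = MulAut.conj gb⁻¹ :=
    mulAut_ext (mkAut_ga.trans (by simp)) (mkAut_gb.trans (by simp))
  have δ₂_eq : δ₂ = MulAut.conj gb :=
    mulAut_ext (mkAut_ga.trans (by simp)) (mkAut_gb.trans (by simp))
  have δ₃_eq : δ₃ = MulAut.conj ga⁻¹ :=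
    mulAut_ext (mkAut_ga.trans (by simp)) (mkAut_gb.trans (by simp))
  have δ₄_eq : δ₄ = MulAut.conj ga :=
    mulAut_ext (mkAut_ga.trans (by simp)) (mkAut_gb.trans (by simp))
  induction g using FreeGroup.induction_on with
  | C1 => exact ⟨[], by simp⟩
  | of i =>
    fin_cases i
    · exact ⟨[3], List.prod_singleton.trans δ₄_eq⟩
    · exact ⟨[1], List.prod_singleton.trans δ₂_eq⟩
  | inv_of i _ =>
    fin_cases i
    · exact ⟨[2], List.prod_singleton.trans δ₃_eq⟩
    · exact ⟨[0], List.prod_singleton.trans δ₁_eq⟩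
  | mul g h ihg ihh =>
    obtain ⟨ds, hds⟩ := ihg
    obtain ⟨es, hes⟩ := ihh
    exact ⟨ds ++ es, by rw [List.map_append, List.prod_append, hds, hes, map_mul]⟩

end Relations

/-- Corollary 5.2: every automorphism of `F₂` factors as `β ∘ δ ∘ φ'` with `β` of type (W1),
`δ` a composition of the `δᵢ` and `φ'` a chain of type (C1) or (C2). -/
theorem stmt18 (φ : MulAut F) :
    ∃ β : MulAut F, IsW1 β ∧ ∃ ds : List (Fin 4), ∃ φ' : MulAut F,
      (IsC1 φ' ∨ IsC2 φ') ∧ φ = β * (ds.map δIdx).prod * φ' := by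
  have mem_nielsenGroup : φ ∈ nielsenGroup := nielsenGroup_eq_top ▸ Subgroup.mem_top φ
  obtain ⟨κ, hκ, φ', hφ', rfl⟩ := closure_insert_subset_mul_oneSignChains
    σ_mul_τ_inv_mul_σ_mem τ_mul_σ_inv_mul_τ_mem exists_conj_σ_eq_inv (fun _ => σ_mul_mem)
    mem_nielsenGroup
  obtain ⟨β, hβ, g, rfl⟩ := mem_signedPermsInner.1 hκ
  obtain ⟨ds, hds⟩ := exists_prod_δIdx_eq_conj g
  exact ⟨β, hβ, ds, φ', isC1_or_isC2_of_mem_oneSignChains hφ', by rw [hds]⟩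
end
end
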